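/- Let m ≥ 2 be an integer and let M, N be coprime integers with N odd and positive, so that ζ = e^{2πiM/N} is a primitive odd Nth root of unity. Then lim_{t→0⁺} (m−1)·e^{(2πiM/N − t)(2m−3)²/(8(m−1))}·G_m(e^{2πiM/N − t}) = e^{2πiM(2m−3)²/(8(m−1)N)}·U_{m,N}(ζ). -/

import Mathlib

open Finset

/-- The q-Pochhammer symbol `(x;q)_n = ∏_{j=0}^{n-1} (1 - x q^j)`. -/
noncomputable def qPoch (x q : ℂ) (n : ℕ) : ℂ := ∏ j ∈ Finset.range n, (1 - x * q ^ j)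

/-- The Gaussian binomial coefficient `[n choose k]_q`. -/
noncomputable def qBinom (q : ℂ) (n k : ℕ) : ℂ :=
  if k ≤ n then qPoch q q n / (qPoch q q (n - k) * qPoch q q k) else 0

/-- Extend a tuple `g : Fin k → ℕ` to `ℕ → ℕ` by zero. -/
def pad (k : ℕ) (g : Fin k → ℕ) : ℕ → ℕ := fun j => if h : j < k then g ⟨j, h⟩ else 0

/-- The general term of the multi-sum `G_m(q)`: here `n j` denotes `n_{j+1}` (0-based indexing),
so `n (m-2)` is `n_{m-1}` and `n 0` is `n_1`. -/
noncomputable def Gterm (m : ℕ) (q : ℂ) (n : ℕ → ℕ) : ℂ :=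
  (-1) ^ (n (m - 2)) *
    q ^ (n (m - 2) * (n (m - 2) + 1) +
        ∑ j ∈ Finset.range (m - 2), (2 * (n j) ^ 2 + 2 * n j)) *
    qPoch q (q ^ 2) (n 0) / qPoch (-q) q (2 * n 0 + 1) *
    ∏ i ∈ Finset.range (m - 2), qBinom (q ^ 2) (n (i + 1)) (n i)

/-- The multi-sum `G_m(q)`. -/
noncomputable def G (m : ℕ) (q : ℂ) : ℂ := ∑' n : Fin (m - 1) → ℕ, Gterm m q (pad (m - 1) n)

/-- The truncated multi-sum `U_{m,N}(q)`. -/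
noncomputable def U (m N : ℕ) (q : ℂ) : ℂ :=
  ∑ n ∈ Fintype.piFinset (fun _ : Fin (m - 1) => Finset.range N), Gterm m q (pad (m - 1) n)

/-- The odd periodic function `χ_{4(m-1)}`. -/
def chiG (m : ℕ) (k : ℤ) : ℤ :=
  if k % (4 * ((m : ℤ) - 1)) = (2 * (m : ℤ) - 3) % (4 * ((m : ℤ) - 1)) then 1
  else if k % (4 * ((m : ℤ) - 1)) = (2 * (m : ℤ) - 1) % (4 * ((m : ℤ) - 1)) then -1
  else 0


lemma qPoch_succ (x q : ℂ) (n : ℕ) : qPoch x q (n + 1) = qPoch x q n * (1 - x * q ^ n) := by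
  unfold qPoch; rw [Finset.prod_range_succ]

lemma qPoch_zero (x q : ℂ) : qPoch x q 0 = 1 := by simp [qPoch]

lemma qPoch_succ' (x q : ℂ) (n : ℕ) : qPoch x q (n + 1) = (1 - x) * qPoch (x * q) q n := by
  unfold qPoch; rw [Finset.prod_range_succ', mul_comm]
  simp only [pow_zero, mul_one]
  congr 1
  apply Finset.prod_congr rfl; intro i _; ring

/-- `(q;q)_n` -/
noncomputable def QQ (p : ℂ) (n : ℕ) : ℂ := qPoch p p n

lemma QQ_zero (p : ℂ) : QQ p 0 = 1 := qPoch_zero _ _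

lemma QQ_succ (p : ℂ) (n : ℕ) : QQ p (n + 1) = QQ p n * (1 - p ^ (n + 1)) := by
  unfold QQ; rw [qPoch_succ, pow_succ' p n]

lemma QQ_ne (p : ℂ) (h : ∀ n : ℕ, 1 - p ^ (n + 1) ≠ 0) (n : ℕ) : QQ p n ≠ 0 := by
  induction n with
  | zero => simp [QQ_zero]
  | succ n ih => rw [QQ_succ]; exact mul_ne_zero ih (h n)

lemma qBinom_self (p : ℂ) (h : ∀ n : ℕ, 1 - p ^ (n + 1) ≠ 0) (n : ℕ) : qBinom p n n = 1 := by
  have := QQ_ne p h n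
  unfold qBinom; simp only [le_refl, if_true, Nat.sub_self, qPoch_zero, one_mul]
  exact div_self this

lemma qBinom_zero' (p : ℂ) (h : ∀ n : ℕ, 1 - p ^ (n + 1) ≠ 0) (n : ℕ) : qBinom p n 0 = 1 := by
  have := QQ_ne p h n
  unfold qBinom; simp only [Nat.zero_le, if_true, Nat.sub_zero, qPoch_zero, mul_one]
  exact div_self this

lemma qBinom_gt (p : ℂ) {n k : ℕ} (h : n < k) : qBinom p n k = 0 := by
  unfold qBinom; rw [if_neg (by omega)]

lemma qBinom_add (p : ℂ) (a b : ℕ) : qBinom p (a + b) b = QQ p (a + b) / (QQ p a * QQ p b) := by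
  unfold qBinom QQ; simp

lemma qBinom_pascal (p : ℂ) (h : ∀ n : ℕ, 1 - p ^ (n + 1) ≠ 0) (n i : ℕ) :
    qBinom p (n + 1) (i + 1) = qBinom p n i + p ^ (i + 1) * qBinom p n (i + 1) := by
  rcases lt_trichotomy n i with hi | hi | hi
  · rw [qBinom_gt p hi, qBinom_gt p (by omega), qBinom_gt p (by omega)]; ring
  · subst hi
    rw [qBinom_self p h, qBinom_self p h, qBinom_gt p (by omega)]; ring
  · obtain ⟨a, rfl⟩ := Nat.exists_eq_add_of_lt hi
    have e1 : i + a + 1 + 1 = (a + 1) + (i + 1) := by ring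
    have e2 : i + a + 1 = (a + 1) + i := by ring
    have e3 : i + a + 1 = a + (i + 1) := by ring
    rw [e1, qBinom_add]
    nth_rewrite 1 [e2]
    rw [qBinom_add, e3, qBinom_add]
    rw [show a + 1 + (i + 1) = (a + i + 1) + 1 by ring, show a + 1 + i = a + i + 1 by ring,
      show a + (i + 1) = a + i + 1 by ring, QQ_succ p (a + i + 1), QQ_succ p a, QQ_succ p i]
    have h1 := QQ_ne p h a
    have h2 := QQ_ne p h i
    have h3 := h a
    have h4 := h i
    field_simp
    ring

lemma sum_pascal (p : ℂ) (h : ∀ n : ℕ, 1 - p ^ (n + 1) ≠ 0) (n : ℕ) (f : ℕ → ℂ) :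
    ∑ i ∈ range (n + 2), qBinom p (n + 1) i * f i =
      ∑ i ∈ range (n + 1), qBinom p n i * (p ^ i * f i + f (i + 1)) := by
  rw [Finset.sum_range_succ']
  simp only [qBinom_pascal p h, add_mul, Finset.sum_add_distrib, mul_add]
  rw [qBinom_zero' p h]
  have h1 : ∑ i ∈ range (n + 1), qBinom p n i * (p ^ i * f i) =
      ∑ i ∈ range (n + 1), p ^ (i + 1) * qBinom p n (i + 1) * f (i + 1) + 1 * f 0 := by
    have h2 : ∑ i ∈ range (n + 2), qBinom p n i * (p ^ i * f i) =
      ∑ i ∈ range (n + 1), qBinom p n i * (p ^ i * f i) := by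
      rw [Finset.sum_range_succ, qBinom_gt p (by omega : n < n + 1)]; simp
    rw [← h2, Finset.sum_range_succ', qBinom_zero' p h]
    simp only [pow_zero, one_mul]
    congr 1
    apply Finset.sum_congr rfl; intro i _; ring
  rw [h1]; ring

lemma vander (p : ℂ) (h : ∀ n : ℕ, 1 - p ^ (n + 1) ≠ 0) (n : ℕ) : ∀ a : ℕ,
    ∑ i ∈ range (n + 1), qBinom p n i * (p ^ (i * (i + a)) / QQ p (i + a)) = 1 / QQ p (n + a) := by
  induction n with
  | zero => intro a; simp [qBinom_self p h]
  | succ n ih =>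
    intro a
    rw [sum_pascal p h, show n + 1 + a = n + (a + 1) by ring, ← ih (a + 1)]
    apply Finset.sum_congr rfl
    intro i _
    congr 1
    rw [show i + 1 + a = i + a + 1 by ring, show i + (a + 1) = i + a + 1 by ring, QQ_succ]
    have h1 := QQ_ne p h (i + a)
    have h2 := h (i + a)
    rw [show (i + 1) * (i + a + 1) = i * (i + a + 1) + (i + a + 1) by ring,
      show i * (i + a + 1) = i + i * (i + a) by ring]
    rw [pow_add p (i + i * (i + a)), pow_add p i (i * (i + a))]
    field_simp
    ring

lemma qbinthm (q : ℂ) (h : ∀ n : ℕ, 1 - (q ^ 2) ^ (n + 1) ≠ 0) (n : ℕ) : ∀ z : ℂ,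
    ∑ i ∈ range (n + 1), qBinom (q ^ 2) n i * ((-1) ^ i * q ^ (i * (i - 1)) * z ^ i)
      = qPoch z (q ^ 2) n := by
  induction n with
  | zero => intro a; simp [qBinom_self _ h, qPoch_zero]
  | succ n ih =>
    intro z
    rw [sum_pascal _ h, qPoch_succ', ← ih (z * q ^ 2), Finset.mul_sum]
    apply Finset.sum_congr rfl
    intro i _
    have : q ^ ((i + 1) * (i + 1 - 1)) = q ^ (i * (i - 1)) * q ^ (2 * i) := by
      rw [← pow_add]; congr 1
      rcases i with _ | i
      · simp
      · simp only [Nat.add_sub_cancel]; ring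
    rw [this]
    ring

lemma neg_prod (q : ℂ) (hq : q ≠ 0) (n : ℕ) :
    qPoch (q / (q ^ 2) ^ n) (q ^ 2) n * q ^ (n ^ 2) = (-1) ^ n * qPoch q (q ^ 2) n := by
  induction n with
  | zero => simp [qPoch_zero]
  | succ n ih =>
    rw [qPoch_succ', qPoch_succ, show q / (q ^ 2) ^ (n + 1) * q ^ 2 = q / (q ^ 2) ^ n by
      rw [pow_succ]; field_simp]
    have e : q ^ ((n + 1) ^ 2) = q ^ (n ^ 2) * q ^ (2 * n + 1) := by rw [← pow_add]; congr 1; ring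
    rw [e]
    calc _ = (1 - q / (q ^ 2) ^ (n + 1)) * q ^ (2 * n + 1) *
          (qPoch (q / (q ^ 2) ^ n) (q ^ 2) n * q ^ (n ^ 2)) := by ring
      _ = (q ^ (2 * n + 1) - 1) * ((-1) ^ n * qPoch q (q ^ 2) n) := by
          rw [ih]; congr 1; field_simp; ring
      _ = _ := by ring

lemma qPoch_add (x q : ℂ) (a b : ℕ) : qPoch x q (a + b) = qPoch x q a * qPoch (x * q ^ a) q b := by
  unfold qPoch; rw [Finset.prod_range_add]
  congr 1
  apply Finset.prod_congr rfl; intro i _; rw [pow_add]; ring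

lemma big_prod (q : ℂ) (hq : q ≠ 0) (n : ℕ) :
    qPoch (q / (q ^ 2) ^ n) (q ^ 2) (2 * n + 1) * q ^ (n ^ 2) =
      (-1) ^ n * (qPoch q (q ^ 2) n * qPoch q (q ^ 2) (n + 1)) := by
  rw [show 2 * n + 1 = n + (n + 1) by ring, qPoch_add,
    show q / (q ^ 2) ^ n * (q ^ 2) ^ n = q by field_simp]
  calc _ = (qPoch (q / (q ^ 2) ^ n) (q ^ 2) n * q ^ (n ^ 2)) * qPoch q (q ^ 2) (n + 1) := by ring
    _ = _ := by rw [neg_prod q hq]; ring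

lemma QQ_sq (q : ℂ) (n : ℕ) : QQ (q ^ 2) n = QQ q n * qPoch (-q) q n := by
  unfold QQ qPoch
  rw [← Finset.prod_mul_distrib]
  apply Finset.prod_congr rfl; intro i _; ring

lemma QQ_odd (q : ℂ) (n : ℕ) : QQ q (2 * n + 1) = qPoch q (q ^ 2) (n + 1) * QQ (q ^ 2) n := by
  induction n with
  | zero => simp [QQ_succ, QQ_zero, qPoch_succ, qPoch_zero]
  | succ n ih =>
    rw [show 2 * (n + 1) + 1 = (2 * n + 1) + 1 + 1 by ring, QQ_succ, QQ_succ, ih, QQ_succ,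
      qPoch_succ q _ (n + 1)]
    ring

/-- Bailey kernel. -/
noncomputable def ee (p : ℂ) (r n : ℕ) : ℂ :=
  if r ≤ n then QQ p n / (QQ p (n - r) * QQ p (n + r + 1)) else 0

lemma init_pair (q : ℂ) (hq : q ≠ 0) (h : ∀ n : ℕ, 1 - (q ^ 2) ^ (n + 1) ≠ 0) (n : ℕ) :
    ∑ r ∈ range (n + 1), (-1) ^ r * q ^ (r ^ 2) * (1 - q ^ (2 * r + 1)) * ee (q ^ 2) r n =
      qPoch q (q ^ 2) n / qPoch (-q) q (2 * n + 1) := by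
  have hQ := QQ_ne (q ^ 2) h
  have key := qbinthm q h (2 * n + 1) (q / (q ^ 2) ^ n)
  rw [show 2 * n + 1 + 1 = (n + 1) + (n + 1) by ring, Finset.sum_range_add,
    ← Finset.sum_range_reflect] at key
  have hA : ∀ r ∈ range (n + 1),
      qBinom (q ^ 2) (2 * n + 1) (n + 1 - 1 - r) * ((-1) ^ (n + 1 - 1 - r) *
        q ^ ((n + 1 - 1 - r) * ((n + 1 - 1 - r) - 1)) * (q / (q ^ 2) ^ n) ^ (n + 1 - 1 - r)) *
        q ^ (n ^ 2) =
      (-1) ^ n * (QQ (q ^ 2) (2 * n + 1) / QQ (q ^ 2) n) *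
        ((-1) ^ r * q ^ (r ^ 2) * ee (q ^ 2) r n) := by
    intro r hr
    have hr' : r ≤ n := by simpa [Nat.lt_succ_iff] using hr
    obtain ⟨j, rfl⟩ := Nat.exists_eq_add_of_le hr'
    rw [show r + j + 1 - 1 - r = j by omega]
    have e1 : qBinom (q ^ 2) (2 * (r + j) + 1) j =
        QQ (q ^ 2) (2 * (r + j) + 1) / (QQ (q ^ 2) (r + j + r + 1) * QQ (q ^ 2) j) := by
      rw [show 2 * (r + j) + 1 = (r + j + r + 1) + j by ring, qBinom_add]
    have e2 : ee (q ^ 2) r (r + j) = QQ (q ^ 2) (r + j) / (QQ (q ^ 2) j * QQ (q ^ 2) (r + j + r + 1)) := by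
      unfold ee; simp
    have e3 : q ^ (j * (j - 1)) * (q / (q ^ 2) ^ (r + j)) ^ j * q ^ ((r + j) ^ 2) = q ^ (r ^ 2) := by
      have : j * (j - 1) + j = j ^ 2 := by
        rcases j with _ | j
        · simp
        · simp only [Nat.add_sub_cancel]; ring
      rw [div_pow, ← mul_div_assoc, ← pow_add, this, ← pow_mul, ← pow_mul]
      field_simp
      rw [← pow_add, ← pow_add]; congr 1; ring
    have e4 : ((-1 : ℂ)) ^ (r + j) * (-1) ^ r = (-1) ^ j := by
      rw [← pow_add, show r + j + r = 2 * r + j by ring, pow_add, pow_mul]; simp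
    rw [e1, e2, ← e3, ← e4]
    have h1 := hQ (r + j)
    field_simp
  have hB : ∀ r ∈ range (n + 1),
      qBinom (q ^ 2) (2 * n + 1) (n + 1 + r) * ((-1) ^ (n + 1 + r) *
        q ^ ((n + 1 + r) * ((n + 1 + r) - 1)) * (q / (q ^ 2) ^ n) ^ (n + 1 + r)) *
        q ^ (n ^ 2) =
      - ((-1) ^ n * (QQ (q ^ 2) (2 * n + 1) / QQ (q ^ 2) n) *
        ((-1) ^ r * q ^ (r ^ 2) * q ^ (2 * r + 1) * ee (q ^ 2) r n)) := by
    intro r hr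
    have hr' : r ≤ n := by simpa [Nat.lt_succ_iff] using hr
    obtain ⟨j, rfl⟩ := Nat.exists_eq_add_of_le hr'
    have e1 : qBinom (q ^ 2) (2 * (r + j) + 1) (r + j + 1 + r) =
        QQ (q ^ 2) (2 * (r + j) + 1) / (QQ (q ^ 2) j * QQ (q ^ 2) (r + j + r + 1)) := by
      rw [show 2 * (r + j) + 1 = j + (r + j + 1 + r) by ring, qBinom_add,
        show r + j + r + 1 = r + j + 1 + r by ring]
    have e2 : ee (q ^ 2) r (r + j) = QQ (q ^ 2) (r + j) / (QQ (q ^ 2) j * QQ (q ^ 2) (r + j + r + 1)) := by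
      unfold ee; simp
    have e3 : q ^ ((r + j + 1 + r) * ((r + j + 1 + r) - 1)) * (q / (q ^ 2) ^ (r + j)) ^ (r + j + 1 + r)
        * q ^ ((r + j) ^ 2) = q ^ (r ^ 2) * q ^ (2 * r + 1) := by
      have : (r + j + 1 + r) * ((r + j + 1 + r) - 1) + (r + j + 1 + r) = (r + j + 1 + r) ^ 2 := by
        rw [show r + j + 1 + r - 1 = r + j + r by omega]; ring
      rw [div_pow, ← mul_div_assoc, ← pow_add, this, ← pow_mul, ← pow_mul]
      field_simp
      rw [← pow_add, ← pow_add, ← pow_add]; congr 1; ring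
    have e4 : - (((-1 : ℂ)) ^ (r + j) * (-1) ^ r) = (-1) ^ (r + j + 1 + r) := by
      rw [show r + j + 1 + r = (r + j) + r + 1 by ring, pow_succ, pow_add]; ring
    rw [e1, e2, mul_assoc ((-1 : ℂ) ^ r), ← e3, ← e4]
    have h1 := hQ (r + j)
    field_simp
  have key2 := congrArg (· * q ^ (n ^ 2)) key
  beta_reduce at key2
  rw [add_mul, Finset.sum_mul, Finset.sum_mul] at key2
  rw [Finset.sum_congr rfl hA, Finset.sum_congr rfl hB, ← Finset.sum_add_distrib,
    big_prod q hq n] at key2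
  have hne : QQ (q ^ 2) (2 * n + 1) ≠ 0 := hQ _
  have hne1 := hne
  rw [QQ_sq, QQ_odd] at hne
  have n1 : qPoch (-q) q (2 * n + 1) ≠ 0 := right_ne_zero_of_mul hne
  have n2 : qPoch q (q ^ 2) (n + 1) ≠ 0 := left_ne_zero_of_mul (left_ne_zero_of_mul hne)
  have n3 := hQ n
  have key3 : (-1) ^ n * (QQ (q ^ 2) (2 * n + 1) / QQ (q ^ 2) n) * (∑ r ∈ range (n + 1),
      (-1) ^ r * q ^ (r ^ 2) * (1 - q ^ (2 * r + 1)) * ee (q ^ 2) r n) =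
      (-1) ^ n * (qPoch q (q ^ 2) n * qPoch q (q ^ 2) (n + 1)) := by
    rw [← key2, Finset.mul_sum]
    apply Finset.sum_congr rfl; intro r _; ring
  rw [mul_assoc] at key3
  have key4 := mul_left_cancel₀ (pow_ne_zero n (by norm_num : (-1 : ℂ) ≠ 0)) key3
  rw [QQ_sq, QQ_odd] at key4
  rw [eq_div_iff n1]
  apply mul_left_cancel₀ n2
  have e : qPoch q (q ^ 2) (n + 1) * QQ (q ^ 2) n * qPoch (-q) q (2 * n + 1) / QQ (q ^ 2) n =
    qPoch q (q ^ 2) (n + 1) * qPoch (-q) q (2 * n + 1) := by field_simp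
  rw [e] at key4
  linear_combination key4

lemma chain_step (p : ℂ) (h : ∀ n : ℕ, 1 - p ^ (n + 1) ≠ 0) (r n K : ℕ) (hn : n < K) :
    ∑ j ∈ range K, p ^ (j ^ 2 + j) * qBinom p n j * ee p r j = p ^ (r ^ 2 + r) * ee p r n := by
  have hQ := QQ_ne p h
  have h0 : ∑ j ∈ range K, p ^ (j ^ 2 + j) * qBinom p n j * ee p r j =
      ∑ j ∈ range (n + 1), p ^ (j ^ 2 + j) * qBinom p n j * ee p r j := by
    symm
    apply Finset.sum_subset
    · intro x hx; simp at hx ⊢; omega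
    · intro x _ hx
      rw [qBinom_gt p (by simp at hx; omega)]; simp
  rw [h0]
  by_cases hr : r ≤ n
  · obtain ⟨a, rfl⟩ := Nat.exists_eq_add_of_le hr
    rw [show r + a + 1 = r + (a + 1) by ring, Finset.sum_range_add]
    have z : ∑ j ∈ range r, p ^ (j ^ 2 + j) * qBinom p (r + a) j * ee p r j = 0 := by
      apply Finset.sum_eq_zero
      intro j hj
      unfold ee; rw [if_neg (by simp at hj; omega)]; simp
    rw [z, zero_add]
    have v := vander p h a (2 * r + 1)
    have e2 : ee p r (r + a) = QQ p (r + a) / QQ p a * (1 / QQ p (a + (2 * r + 1))) := by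
      unfold ee; simp
      rw [show a + (2 * r + 1) = r + a + r + 1 by ring]; field_simp
    rw [e2, ← v, Finset.mul_sum, Finset.mul_sum]
    apply Finset.sum_congr rfl
    intro i hi
    obtain ⟨b, rfl⟩ := Nat.exists_eq_add_of_le (show i ≤ a by simp at hi; omega)
    have e3 : qBinom p (i + b) i = QQ p (i + b) / (QQ p b * QQ p i) := by
      rw [add_comm i b, qBinom_add]
    have e4 : qBinom p (r + (i + b)) (r + i) = QQ p (r + (i + b)) / (QQ p b * QQ p (r + i)) := by
      rw [show r + (i + b) = b + (r + i) by ring, qBinom_add]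
    have e5 : ee p r (r + i) = QQ p (r + i) / (QQ p i * QQ p (i + (2 * r + 1))) := by
      unfold ee; simp
      rw [show i + (2 * r + 1) = r + i + r + 1 by ring]
    rw [e3, e4, e5, show (r + i) ^ 2 + (r + i) = (r ^ 2 + r) + i * (i + (2 * r + 1)) by ring,
      pow_add p (r ^ 2 + r)]
    have n1 := hQ (r + i)
    have n2 := hQ (i + b)
    have n3 := hQ i
    have n4 := hQ b
    field_simp
  · have : ee p r n = 0 := by unfold ee; rw [if_neg hr]
    rw [this, mul_zero]
    apply Finset.sum_eq_zero
    intro j hj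
    unfold ee; rw [if_neg (by simp at hj; omega)]; simp

/-- truncated sum of Bailey kernels -/
noncomputable def SS (q : ℂ) (K r : ℕ) : ℂ :=
  ∑ n ∈ range K, (-1) ^ n * q ^ (n * (n + 1)) * ee (q ^ 2) r n

/-- boundary kernel -/
noncomputable def gg (p : ℂ) (K r : ℕ) : ℂ :=
  if r ≤ K then QQ p K / (QQ p (K - r) * QQ p (K + r)) else 0

lemma SS_zero (q : ℂ) (h : ∀ n : ℕ, 1 - (q ^ 2) ^ (n + 1) ≠ 0) (K : ℕ) :
    SS q K 0 = 1 - (-1) ^ K * q ^ (K * (K + 1)) / QQ (q ^ 2) K := by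
  have hQ := QQ_ne _ h
  induction K with
  | zero => simp [SS, QQ_zero]
  | succ K ih =>
    have : SS q (K + 1) 0 = SS q K 0 + (-1) ^ K * q ^ (K * (K + 1)) * ee (q ^ 2) 0 K := by
      unfold SS; rw [Finset.sum_range_succ]
    rw [this, ih]
    unfold ee
    simp only [Nat.zero_le, if_true, Nat.sub_zero, add_zero]
    rw [QQ_succ]
    have h1 := hQ K
    have h2 := h K
    have e3 : q ^ ((K + 1) * (K + 1 + 1)) = q ^ (K * (K + 1)) * (q ^ 2) ^ (K + 1) := by
      rw [← pow_mul, ← pow_add]; congr 1; ring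
    rw [e3]
    field_simp
    ring

lemma SS_succ (q : ℂ) (h : ∀ n : ℕ, 1 - (q ^ 2) ^ (n + 1) ≠ 0) (r K : ℕ) :
    SS q K (r + 1) + (q ^ 2) ^ (r + 1) * SS q K r =
      - ((1 + (q ^ 2) ^ (r + 1)) * (-1) ^ K * q ^ (K * (K + 1)) * gg (q ^ 2) K (r + 1)) := by
  have hQ := QQ_ne _ h
  induction K with
  | zero => simp [SS, gg]
  | succ K ih =>
    have e1 : ∀ r, SS q (K + 1) r = SS q K r + (-1) ^ K * q ^ (K * (K + 1)) * ee (q ^ 2) r K := by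
      intro r; unfold SS; rw [Finset.sum_range_succ]
    have e2 : SS q (K + 1) (r + 1) + (q ^ 2) ^ (r + 1) * SS q (K + 1) r =
       - ((1 + (q ^ 2) ^ (r + 1)) * (-1) ^ K * q ^ (K * (K + 1)) * gg (q ^ 2) K (r + 1)) +
       (-1) ^ K * q ^ (K * (K + 1)) * (ee (q ^ 2) (r + 1) K + (q ^ 2) ^ (r + 1) * ee (q ^ 2) r K) := by
      rw [← ih, e1, e1]; ring
    rw [e2]
    have e3 : q ^ ((K + 1) * (K + 1 + 1)) = q ^ (K * (K + 1)) * (q ^ 2) ^ (K + 1) := by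
      rw [← pow_mul, ← pow_add]; congr 1; ring
    rw [e3]
    suffices hs : ee (q ^ 2) (r + 1) K + (q ^ 2) ^ (r + 1) * ee (q ^ 2) r K =
        (1 + (q ^ 2) ^ (r + 1)) * (gg (q ^ 2) K (r + 1) + (q ^ 2) ^ (K + 1) * gg (q ^ 2) (K + 1) (r + 1)) by
      rw [hs]; ring
    generalize q ^ 2 = p at *
    rcases lt_trichotomy K r with hK | hK | hK
    · unfold ee gg
      rw [if_neg (by omega), if_neg (by omega), if_neg (by omega), if_neg (by omega)]; simp
    · subst hK
      unfold ee gg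
      rw [if_neg (by omega), if_pos (by omega), if_neg (by omega), if_pos (by omega)]
      simp only [Nat.sub_self, QQ_zero, one_mul]
      rw [show K + 1 + (K + 1) = K + K + 1 + 1 by ring, QQ_succ p (K + K + 1), QQ_succ p K]
      have h1 := hQ (K + K + 1)
      have h2 := h (K + K + 1)
      have h3 := hQ K
      have h4 : 1 - p ^ (K + K + 1 + 1) = (1 - p ^ (K + 1)) * (1 + p ^ (K + 1)) := by ring
      rw [h4] at h2 ⊢
      have h5 := left_ne_zero_of_mul h2
      have h6 := right_ne_zero_of_mul h2
      field_simp
      ring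
    · obtain ⟨a, rfl⟩ := Nat.exists_eq_add_of_lt hK
      unfold ee gg
      rw [if_pos (by omega), if_pos (by omega), if_pos (by omega), if_pos (by omega)]
      rw [show r + a + 1 - (r + 1) = a by omega, show r + a + 1 - r = a + 1 by omega,
        show r + a + 1 + 1 - (r + 1) = a + 1 by omega,
        show r + a + 1 + 1 + (r + 1) = (r + a + 1 + r + 1) + 1 by ring,
        show r + a + 1 + (r + 1) = r + a + 1 + r + 1 by ring,
        QQ_succ p (r + a + 1 + r + 1), QQ_succ p a, QQ_succ p (r + a + 1)]
      have h1 := hQ (r + a + 1 + r + 1)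
      have h2 := h (r + a + 1 + r + 1)
      have h3 := hQ a
      have h4 := h a
      have h5 := hQ (r + a + 1)
      have h6 := h (r + a + 1)
      field_simp
      ring

/-- normalised truncated sum -/
noncomputable def HH (q : ℂ) (K r : ℕ) : ℂ :=
  ∑ j ∈ range r, (1 + (q ^ 2) ^ (j + 1)) * (-1) ^ (K + j + 1) * q ^ (K * (K + 1)) /
    q ^ ((j + 1) * (j + 2)) * gg (q ^ 2) K (j + 1)

lemma SS_closed (q : ℂ) (hq : q ≠ 0) (h : ∀ n : ℕ, 1 - (q ^ 2) ^ (n + 1) ≠ 0) (K r : ℕ) :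
    SS q K r = (-1) ^ r * q ^ (r * (r + 1)) *
      (1 - (-1) ^ K * q ^ (K * (K + 1)) / QQ (q ^ 2) K - HH q K r) := by
  induction r with
  | zero => simp [SS_zero q h, HH]
  | succ r ih =>
    have e : HH q K (r + 1) = HH q K r + (1 + (q ^ 2) ^ (r + 1)) * (-1) ^ (K + r + 1) *
        q ^ (K * (K + 1)) / q ^ ((r + 1) * (r + 2)) * gg (q ^ 2) K (r + 1) := by
      unfold HH; rw [Finset.sum_range_succ]
    have e1 := SS_succ q h r K
    rw [ih] at e1
    have e2 : q ^ ((r + 1) * (r + 1 + 1)) = q ^ (r * (r + 1)) * (q ^ 2) ^ (r + 1) := by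
      rw [← pow_mul, ← pow_add]; congr 1; ring
    have e3 : ((-1 : ℂ)) ^ (K + r + 1) = - ((-1) ^ K * (-1) ^ r) := by
      rw [pow_succ, pow_add]; ring
    have e4 : ((-1 : ℂ)) ^ r * (-1) ^ r = 1 := by
      rw [← mul_pow]; simp
    rw [e, e3, e2, pow_succ (-1 : ℂ) r]
    have n1 : q ^ (r * (r + 1)) * (q ^ 2) ^ (r + 1) ≠ 0 := by positivity
    have e5 : ∀ X : ℂ, (-1) ^ r * -1 * (q ^ (r * (r + 1)) * (q ^ 2) ^ (r + 1)) *
       (X - (HH q K r + (1 + (q ^ 2) ^ (r + 1)) * -((-1) ^ K * (-1) ^ r) * q ^ (K * (K + 1)) /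
        (q ^ (r * (r + 1)) * (q ^ 2) ^ (r + 1)) * gg (q ^ 2) K (r + 1)) ) =
       (-1) ^ r * -1 * (q ^ (r * (r + 1)) * (q ^ 2) ^ (r + 1)) * (X - HH q K r) -
       ((-1) ^ r * (-1) ^ r) * ((1 + (q ^ 2) ^ (r + 1)) * (-1) ^ K * q ^ (K * (K + 1)) *
         gg (q ^ 2) K (r + 1)) := by
      intro X
      field_simp
      ring
    rw [e5, e4]
    linear_combination e1

/-- the Bailey coefficients -/
noncomputable def AA (q : ℂ) (l r : ℕ) : ℂ :=
  (-1) ^ r * q ^ (r ^ 2 + l * (2 * r ^ 2 + 2 * r)) * (1 - q ^ (2 * r + 1))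

/-- nested sums -/
noncomputable def hh (q : ℂ) (K : ℕ) : ℕ → ℕ → ℂ
  | 0, n => qPoch q (q ^ 2) n / qPoch (-q) q (2 * n + 1)
  | l + 1, n => ∑ j ∈ range K, q ^ (2 * j ^ 2 + 2 * j) * qBinom (q ^ 2) n j * hh q K l j

lemma hh_eq (q : ℂ) (hq : q ≠ 0) (h : ∀ n : ℕ, 1 - (q ^ 2) ^ (n + 1) ≠ 0) (K l : ℕ) : ∀ n < K,
    hh q K l n = ∑ r ∈ range K, AA q l r * ee (q ^ 2) r n := by
  induction l with
  | zero =>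
    intro n hn
    unfold hh
    rw [← init_pair q hq h n]
    have : range (n + 1) ⊆ range K := by intro x; simp; omega
    rw [← Finset.sum_subset this]
    · apply Finset.sum_congr rfl; intro r _; simp [AA]
    · intro x _ hx
      unfold ee; rw [if_neg (by simp at hx; omega)]; simp
  | succ l ih =>
    intro n hn
    unfold hh
    have : ∀ j ∈ range K, q ^ (2 * j ^ 2 + 2 * j) * qBinom (q ^ 2) n j * hh q K l j =
        ∑ r ∈ range K, AA q l r * ((q ^ 2) ^ (j ^ 2 + j) * qBinom (q ^ 2) n j * ee (q ^ 2) r j) := by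
      intro j hj
      rw [ih j (by simpa using hj), Finset.mul_sum]
      apply Finset.sum_congr rfl; intro r _
      rw [← pow_mul q 2, show 2 * (j ^ 2 + j) = 2 * j ^ 2 + 2 * j by ring]; ring
    rw [Finset.sum_congr rfl this, Finset.sum_comm]
    apply Finset.sum_congr rfl; intro r _
    rw [← Finset.mul_sum, chain_step _ h r n K hn]
    unfold AA
    rw [← pow_mul q 2, show r ^ 2 + (l + 1) * (2 * r ^ 2 + 2 * r) =
      (r ^ 2 + l * (2 * r ^ 2 + 2 * r)) + 2 * (r ^ 2 + r) by ring, pow_add q _ (2 * (r ^ 2 + r))]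
    ring

lemma pad_snoc_lt (l : ℕ) (g : Fin l → ℕ) (x j : ℕ) (hj : j < l) :
    pad (l + 1) (Fin.snoc g x : Fin (l + 1) → ℕ) j = pad l g j := by
  unfold pad
  rw [dif_pos (by omega), dif_pos hj]
  have : (⟨j, by omega⟩ : Fin (l + 1)) = Fin.castSucc ⟨j, hj⟩ := rfl
  rw [this, Fin.snoc_castSucc (α := fun _ => ℕ)]

lemma pad_snoc_last (l : ℕ) (g : Fin l → ℕ) (x : ℕ) :
    pad (l + 1) (Fin.snoc g x : Fin (l + 1) → ℕ) l = x := by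
  unfold pad
  rw [dif_pos (by omega)]
  have : (⟨l, by omega⟩ : Fin (l + 1)) = Fin.last l := rfl
  rw [this, Fin.snoc_last (α := fun _ => ℕ)]

lemma sum_pi_snoc (l K : ℕ) (F : (Fin (l + 1) → ℕ) → ℂ) :
    ∑ n ∈ Fintype.piFinset (fun _ : Fin (l + 1) => range K), F n =
      ∑ x ∈ range K, ∑ g ∈ Fintype.piFinset (fun _ : Fin l => range K), F (Fin.snoc g x) := by
  rw [← Finset.sum_product']
  symm
  apply Finset.sum_bij' (fun (y : ℕ × (Fin l → ℕ)) _ => (Fin.snoc y.2 y.1 : Fin (l + 1) → ℕ))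
    (fun n _ => (n (Fin.last l), Fin.init n))
  · intro y hy
    simp only [Finset.mem_product, Fintype.mem_piFinset, Finset.mem_range] at hy ⊢
    intro i
    refine Fin.lastCases ?_ (fun i => ?_) i
    · simpa using hy.1
    · simpa using hy.2 i
  · intro n hn
    simp only [Finset.mem_product, Fintype.mem_piFinset, Finset.mem_range] at hn ⊢
    exact ⟨hn _, fun i => hn _⟩
  · intro y hy; simp
  · intro n hn; simp
  · intro y hy; rfl

lemma nest (q : ℂ) (K l : ℕ) : ∀ Φ : ℕ → ℂ,
    ∑ n ∈ Fintype.piFinset (fun _ : Fin (l + 1) => range K),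
      Φ (pad (l + 1) n l) * (q ^ (∑ j ∈ range l, (2 * (pad (l + 1) n j) ^ 2 + 2 * pad (l + 1) n j)) *
      (qPoch q (q ^ 2) (pad (l + 1) n 0) / qPoch (-q) q (2 * pad (l + 1) n 0 + 1)) *
      ∏ i ∈ range l, qBinom (q ^ 2) (pad (l + 1) n (i + 1)) (pad (l + 1) n i))
    = ∑ x ∈ range K, Φ x * hh q K l x := by
  induction l with
  | zero =>
    intro Φ
    rw [sum_pi_snoc]
    apply Finset.sum_congr rfl
    intro x _
    rw [Fintype.piFinset_of_isEmpty]
    simp only [Finset.univ_unique, Finset.sum_singleton, pad_snoc_last]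
    simp [hh]
  | succ l ih =>
    intro Φ
    rw [sum_pi_snoc]
    apply Finset.sum_congr rfl
    intro x _
    unfold hh
    have := ih (fun j => Φ x * (q ^ (2 * j ^ 2 + 2 * j) * qBinom (q ^ 2) x j))
    rw [Finset.mul_sum]
    simp only [mul_assoc] at this ⊢
    rw [← this]
    apply Finset.sum_congr rfl
    intro g _
    rw [pad_snoc_last, Finset.sum_range_succ, Finset.prod_range_succ, pad_snoc_last,
      pad_snoc_lt _ _ _ l (by omega), pad_snoc_lt _ _ _ 0 (by omega)]
    have a1 : ∑ j ∈ range l, (2 * (pad (l + 1 + 1) (Fin.snoc g x : Fin (l + 2) → ℕ) j) ^ 2 +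
        2 * pad (l + 1 + 1) (Fin.snoc g x : Fin (l + 2) → ℕ) j) =
        ∑ j ∈ range l, (2 * (pad (l + 1) g j) ^ 2 + 2 * pad (l + 1) g j) := by
      apply Finset.sum_congr rfl; intro j hj
      rw [pad_snoc_lt _ _ _ j (by simp at hj; omega)]
    have a2 : ∏ i ∈ range l, qBinom (q ^ 2) (pad (l + 1 + 1) (Fin.snoc g x : Fin (l + 2) → ℕ) (i + 1))
        (pad (l + 1 + 1) (Fin.snoc g x : Fin (l + 2) → ℕ) i) =
        ∏ i ∈ range l, qBinom (q ^ 2) (pad (l + 1) g (i + 1)) (pad (l + 1) g i) := by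
      apply Finset.prod_congr rfl; intro j hj
      rw [pad_snoc_lt _ _ _ j (by simp at hj; omega), pad_snoc_lt _ _ _ (j + 1) (by simp at hj; omega)]
    rw [a1, a2, pow_add]
    ring

lemma U_eq (q : ℂ) (hq : q ≠ 0) (h : ∀ n : ℕ, 1 - (q ^ 2) ^ (n + 1) ≠ 0) (K l : ℕ) :
    U (l + 2) K q = ∑ r ∈ range K, AA q l r * SS q K r := by
  have h1 := nest q K l (fun x => (-1) ^ x * q ^ (x * (x + 1)))
  have h2 : U (l + 2) K q = ∑ x ∈ range K, (-1) ^ x * q ^ (x * (x + 1)) * hh q K l x := by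
    rw [← h1]
    change ∑ n ∈ Fintype.piFinset (fun _ : Fin (l + 1) => range K), Gterm (l + 2) q (pad (l + 1) n) = _
    unfold Gterm
    apply Finset.sum_congr rfl
    intro n _
    simp only [show l + 2 - 2 = l by omega]
    rw [pow_add q]; ring
  rw [h2]
  have h3 : ∀ x ∈ range K, (-1) ^ x * q ^ (x * (x + 1)) * hh q K l x =
      ∑ r ∈ range K, AA q l r * ((-1) ^ x * q ^ (x * (x + 1)) * ee (q ^ 2) r x) := by
    intro x hx
    rw [hh_eq q hq h K l x (by simpa using hx), Finset.mul_sum]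
    apply Finset.sum_congr rfl; intro r _; ring
  rw [Finset.sum_congr rfl h3, Finset.sum_comm]
  apply Finset.sum_congr rfl; intro r _
  rw [← Finset.mul_sum]; rfl

/-- false theta terms -/
noncomputable def ww (l : ℕ) (q : ℂ) (r : ℕ) : ℂ :=
  q ^ (2 * (l + 1) * r ^ 2 + (2 * l + 1) * r) * (1 - q ^ (2 * r + 1))

lemma AA_ww (q : ℂ) (l r : ℕ) : AA q l r * ((-1) ^ r * q ^ (r * (r + 1))) = ww l q r := by
  unfold AA ww
  rw [show 2 * (l + 1) * r ^ 2 + (2 * l + 1) * r =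
    (r ^ 2 + l * (2 * r ^ 2 + 2 * r)) + r * (r + 1) by ring, pow_add q _ (r * (r + 1))]
  have e4 : ((-1 : ℂ)) ^ r * (-1) ^ r = 1 := by
      rw [← mul_pow]; simp
  linear_combination (q ^ (r ^ 2 + l * (2 * r ^ 2 + 2 * r)) * q ^ (r * (r + 1)) * (1 - q ^ (2 * r + 1))) * e4

lemma U_closed (q : ℂ) (hq : q ≠ 0) (h : ∀ n : ℕ, 1 - (q ^ 2) ^ (n + 1) ≠ 0) (K l : ℕ) :
    U (l + 2) K q = (∑ r ∈ range K, ww l q r) * (1 - (-1) ^ K * q ^ (K * (K + 1)) / QQ (q ^ 2) K) -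
      ∑ r ∈ range K, ww l q r * HH q K r := by
  rw [U_eq q hq h, Finset.sum_mul, ← Finset.sum_sub_distrib]
  apply Finset.sum_congr rfl; intro r _
  rw [SS_closed q hq h, ← AA_ww]; ring

open Filter Topology in
lemma prod_bound (ρ : ℝ) (h0 : 0 ≤ ρ) (h1 : ρ < 1) : ∃ C : ℝ, 1 ≤ C ∧ ∀ x : ℕ → ℂ,
    (∀ j, ‖x j‖ ≤ ρ ^ (j + 1)) → ∀ n, ‖∏ j ∈ range n, (1 - x j)‖ ≤ C ∧
      ‖(∏ j ∈ range n, (1 - x j))⁻¹‖ ≤ C := by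
  have hr : 0 < 1 - ρ := by linarith
  have hsum : ∀ n : ℕ, ∑ j ∈ range n, ρ ^ j / (1 - ρ) ≤ (1 - ρ)⁻¹ / (1 - ρ) := by
    intro n
    rw [← Finset.sum_div]
    gcongr
    rw [← tsum_geometric_of_lt_one h0 h1]
    exact (summable_geometric_of_lt_one h0 h1).sum_le_tsum _ (fun i _ => by positivity)
  refine ⟨Real.exp ((1 - ρ)⁻¹ / (1 - ρ)), Real.one_le_exp (by positivity), ?_⟩
  intro x hx n
  have hle : ∀ j, ρ ^ (j + 1) ≤ ρ := fun j => pow_le_of_le_one h0 h1.le (by omega)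
  have hdiv : ∀ j, ρ ^ (j + 1) / (1 - ρ) ≤ ρ ^ j / (1 - ρ) := by
    intro j; gcongr ?_ / _; exact pow_le_pow_of_le_one h0 h1.le (by omega)
  have e1 : ∀ j, ‖1 - x j‖ ≤ Real.exp (ρ ^ j / (1 - ρ)) := by
    intro j
    calc ‖1 - x j‖ ≤ ‖(1 : ℂ)‖ + ‖x j‖ := norm_sub_le _ _
      _ ≤ ρ ^ (j + 1) / (1 - ρ) + 1 := by
          rw [norm_one]
          have : ρ ^ (j + 1) ≤ ρ ^ (j + 1) / (1 - ρ) := by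
            rw [le_div_iff₀ hr]; nlinarith [pow_nonneg h0 (j + 1)]
          linarith [hx j]
      _ ≤ ρ ^ j / (1 - ρ) + 1 := by linarith [hdiv j]
      _ ≤ _ := Real.add_one_le_exp _
  have e2 : ∀ j, ‖(1 - x j)⁻¹‖ ≤ Real.exp (ρ ^ j / (1 - ρ)) := by
    intro j
    have hpos : 0 < 1 - ρ ^ (j + 1) := by linarith [hle j]
    have a1 : 1 - ρ ^ (j + 1) ≤ ‖1 - x j‖ := by
      have := norm_sub_norm_le (1 : ℂ) (x j)
      rw [norm_one] at this; linarith [hx j]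
    rw [norm_inv]
    calc ‖1 - x j‖⁻¹ ≤ (1 - ρ ^ (j + 1))⁻¹ := by gcongr
      _ ≤ ρ ^ (j + 1) / (1 - ρ) + 1 := by
          rw [inv_le_iff_one_le_mul₀ hpos]
          have b1 : ρ ^ (j + 1) ≤ ρ ^ (j + 1) / (1 - ρ) * (1 - ρ ^ (j + 1)) := by
            rw [div_mul_eq_mul_div, le_div_iff₀ hr]
            have := pow_nonneg h0 (j + 1)
            have := hle j
            gcongr
          nlinarith
      _ ≤ ρ ^ j / (1 - ρ) + 1 := by linarith [hdiv j]
      _ ≤ _ := Real.add_one_le_exp _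
  constructor
  · rw [norm_prod]
    calc _ ≤ ∏ j ∈ range n, Real.exp (ρ ^ j / (1 - ρ)) :=
          Finset.prod_le_prod (fun _ _ => norm_nonneg _) (fun j _ => e1 j)
      _ ≤ _ := by rw [← Real.exp_sum]; exact Real.exp_le_exp.mpr (hsum n)
  · rw [← Finset.prod_inv_distrib, norm_prod]
    calc _ ≤ ∏ j ∈ range n, Real.exp (ρ ^ j / (1 - ρ)) :=
          Finset.prod_le_prod (fun _ _ => norm_nonneg _) (fun j _ => e2 j)
      _ ≤ _ := by rw [← Real.exp_sum]; exact Real.exp_le_exp.mpr (hsum n)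

lemma all_bounds (q : ℂ) (hq : ‖q‖ < 1) : ∃ C : ℝ, 1 ≤ C ∧
    (∀ n, ‖qPoch q (q ^ 2) n‖ ≤ C) ∧ (∀ n, ‖(qPoch (-q) q n)⁻¹‖ ≤ C) ∧
    (∀ n, ‖QQ (q ^ 2) n‖ ≤ C) ∧ (∀ n, ‖(QQ (q ^ 2) n)⁻¹‖ ≤ C) := by
  obtain ⟨C, hC, H⟩ := prod_bound ‖q‖ (norm_nonneg _) hq
  refine ⟨C, hC, fun n => ?_, fun n => ?_, fun n => ?_, fun n => ?_⟩
  · refine (H (fun j => q * (q ^ 2) ^ j) (fun j => ?_) n).1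
    rw [← pow_mul, ← pow_succ', norm_pow]
    exact pow_le_pow_of_le_one (norm_nonneg _) hq.le (by omega)
  · refine (H (fun j => -q * q ^ j) (fun j => ?_) n).2
    rw [neg_mul, ← pow_succ', norm_neg, norm_pow]
  · refine (H (fun j => q ^ 2 * (q ^ 2) ^ j) (fun j => ?_) n).1
    rw [← pow_succ', ← pow_mul, norm_pow]
    exact pow_le_pow_of_le_one (norm_nonneg _) hq.le (by omega)
  · refine (H (fun j => q ^ 2 * (q ^ 2) ^ j) (fun j => ?_) n).2
    rw [← pow_succ', ← pow_mul, norm_pow]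
    exact pow_le_pow_of_le_one (norm_nonneg _) hq.le (by omega)

lemma triple_bound (C : ℝ) (a b c : ℂ) (ha : ‖a‖ ≤ C) (hb : ‖b⁻¹‖ ≤ C) (hc : ‖c⁻¹‖ ≤ C) :
    ‖a / (b * c)‖ ≤ C ^ 3 := by
  have : a / (b * c) = a * b⁻¹ * c⁻¹ := by rw [div_eq_mul_inv, mul_inv]; ring
  rw [this, norm_mul, norm_mul]
  have h0 : 0 ≤ C := le_trans (norm_nonneg _) ha
  calc _ ≤ C * C * C := by gcongr
    _ = _ := by ring

lemma summable_pi (l : ℕ) (ρ : ℝ) (h0 : 0 ≤ ρ) (h1 : ρ < 1) :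
    Summable (fun n : Fin l → ℕ => ∏ i, ρ ^ (n i)) := by
  apply summable_of_sum_le (c := ∏ _i : Fin l, (1 - ρ)⁻¹)
  · intro n; exact Finset.prod_nonneg (fun i _ => by positivity)
  · intro u
    have hsub : u ⊆ Fintype.piFinset (fun _ : Fin l => range ((∑ n ∈ u, ∑ i, n i) + 1)) := by
      intro n hn
      rw [Fintype.mem_piFinset]
      intro i
      rw [Finset.mem_range, Nat.lt_succ_iff]
      calc n i ≤ ∑ i, n i := Finset.single_le_sum (f := fun i => n i) (fun _ _ => Nat.zero_le _) (Finset.mem_univ i)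
        _ ≤ _ := Finset.single_le_sum (f := fun n : Fin l → ℕ => ∑ i, n i) (fun _ _ => Nat.zero_le _) hn
    calc _ ≤ ∑ n ∈ Fintype.piFinset (fun _ : Fin l => range ((∑ n ∈ u, ∑ i, n i) + 1)), ∏ i, ρ ^ (n i) :=
          Finset.sum_le_sum_of_subset_of_nonneg hsub
            (fun n _ _ => Finset.prod_nonneg (fun i _ => by positivity))
      _ = ∏ _i : Fin l, ∑ j ∈ range ((∑ n ∈ u, ∑ i, n i) + 1), ρ ^ j := by
          rw [Finset.prod_univ_sum]
      _ ≤ _ := by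
          apply Finset.prod_le_prod
          · intro i _; exact Finset.sum_nonneg (fun i _ => by positivity)
          · intro i _
            rw [← tsum_geometric_of_lt_one h0 h1]
            exact (summable_geometric_of_lt_one h0 h1).sum_le_tsum _ (fun i _ => by positivity)

lemma Gterm_bound (q : ℂ) (hq : ‖q‖ < 1) (l : ℕ) : ∃ C : ℝ, ∀ n : Fin (l + 1) → ℕ,
    ‖Gterm (l + 2) q (pad (l + 1) n)‖ ≤ C * ∏ i, ‖q‖ ^ (n i) := by
  obtain ⟨C, hC, b1, b2, b3, b4⟩ := all_bounds q hq
  have hC0 : 0 ≤ C := by linarith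
  refine ⟨C * C * (C ^ 3) ^ l, fun n => ?_⟩
  unfold Gterm
  simp only [show l + 2 - 2 = l by omega]
  have e : ∏ i, ‖q‖ ^ (n i) = ‖q‖ ^ (∑ j ∈ range (l + 1), pad (l + 1) n j) := by
    rw [Finset.prod_pow_eq_pow_sum]
    congr 1
    rw [← Fin.sum_univ_eq_sum_range]
    apply Finset.sum_congr rfl
    intro i _
    unfold pad; rw [dif_pos i.isLt]
  rw [e]
  set N := pad (l + 1) n
  have hB : ∀ a b, ‖qBinom (q ^ 2) a b‖ ≤ C ^ 3 := by
    intro a b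
    unfold qBinom
    split_ifs
    · exact triple_bound C _ _ _ (b3 _) (b4 _) (b4 _)
    · simp; positivity
  have hP : ‖∏ i ∈ range l, qBinom (q ^ 2) (N (i + 1)) (N i)‖ ≤ (C ^ 3) ^ l := by
    rw [norm_prod]
    calc _ ≤ ∏ _i ∈ range l, C ^ 3 :=
          Finset.prod_le_prod (fun _ _ => norm_nonneg _) (fun i _ => hB _ _)
      _ = _ := by simp
  have hE : ‖q ^ (N l * (N l + 1) + ∑ j ∈ range l, (2 * N j ^ 2 + 2 * N j))‖ ≤
      ‖q‖ ^ (∑ j ∈ range (l + 1), N j) := by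
    rw [norm_pow]
    apply pow_le_pow_of_le_one (norm_nonneg _) hq.le
    rw [Finset.sum_range_succ, add_comm]
    apply add_le_add
    · nlinarith
    · apply Finset.sum_le_sum; intro j _; nlinarith
  rw [div_eq_mul_inv, norm_mul, norm_mul, norm_mul, norm_mul, norm_pow, norm_neg, norm_one, one_pow, one_mul]
  calc _ ≤ ‖q‖ ^ (∑ j ∈ range (l + 1), N j) * C * C * (C ^ 3) ^ l := by
        gcongr
        · exact b1 _
        · exact b2 _
    _ = _ := by ring

open Filter Topology in
lemma U_tendsto_G (q : ℂ) (hq : ‖q‖ < 1) (l : ℕ) :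
    Tendsto (fun K => U (l + 2) K q) atTop (𝓝 (G (l + 2) q)) := by
  obtain ⟨C, hC⟩ := Gterm_bound q hq l
  have hs : Summable (fun n : Fin (l + 1) → ℕ => Gterm (l + 2) q (pad (l + 1) n)) :=
    Summable.of_norm_bounded ((summable_pi (l + 1) ‖q‖ (norm_nonneg _) hq).mul_left C) hC
  have h1 := hs.hasSum
  have h2 : Tendsto (fun K : ℕ => Fintype.piFinset (fun _ : Fin (l + 1) => range K)) atTop atTop := by
    apply Filter.tendsto_atTop_finset_of_monotone
    · intro a b hab n hn
      simp only [Fintype.mem_piFinset, Finset.mem_range] at hn ⊢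
      intro i; exact lt_of_lt_of_le (hn i) hab
    · intro n
      refine ⟨(∑ i, n i) + 1, ?_⟩
      rw [Fintype.mem_piFinset]
      intro i
      rw [Finset.mem_range, Nat.lt_succ_iff]
      exact Finset.single_le_sum (f := fun i => n i) (fun _ _ => Nat.zero_le _) (Finset.mem_univ i)
  exact h1.comp h2

lemma one_sub_ne (q : ℂ) (hq : ‖q‖ < 1) (n : ℕ) : 1 - (q ^ 2) ^ (n + 1) ≠ 0 := by
  intro h
  have h1 : ‖(q ^ 2) ^ (n + 1)‖ = 1 := by rw [← sub_eq_zero.mp h]; simp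
  rw [← pow_mul, norm_pow] at h1
  have := pow_lt_one₀ (norm_nonneg q) hq (show 2 * (n + 1) ≠ 0 by omega)
  linarith

open Filter Topology in
lemma bdd_zero (q : ℂ) (hq : ‖q‖ < 1) (C : ℝ) (X : ℕ → ℂ) (hX : ∀ K, ‖X K‖ ≤ C) :
    Tendsto (fun K : ℕ => q ^ (K * (K + 1)) * X K) atTop (𝓝 0) := by
  apply squeeze_zero_norm (a := fun K => ‖q‖ ^ K * C)
  · intro K
    rw [norm_mul, norm_pow]
    have : ‖q‖ ^ (K * (K + 1)) ≤ ‖q‖ ^ K :=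
      pow_le_pow_of_le_one (norm_nonneg _) hq.le (by nlinarith)
    gcongr
    exact hX K
  · have := (tendsto_pow_atTop_nhds_zero_of_lt_one (norm_nonneg q) hq).mul_const C
    simpa using this

open Filter Topology in
lemma SS_tendsto (q : ℂ) (hq0 : q ≠ 0) (hq : ‖q‖ < 1) (r : ℕ) :
    Tendsto (fun K => SS q K r) atTop (𝓝 ((-1) ^ r * q ^ (r * (r + 1)))) := by
  obtain ⟨C, hC, b1, b2, b3, b4⟩ := all_bounds q hq
  have hgg : ∀ K r, ‖gg (q ^ 2) K r‖ ≤ C ^ 3 := by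
    intro a b
    unfold gg
    split_ifs
    · exact triple_bound C _ _ _ (b3 _) (b4 _) (b4 _)
    · simp; positivity
  have e : ∀ K, SS q K r = (-1) ^ r * q ^ (r * (r + 1)) *
      (1 - q ^ (K * (K + 1)) * ((-1) ^ K * (QQ (q ^ 2) K)⁻¹) - HH q K r) := by
    intro K
    rw [SS_closed q hq0 (one_sub_ne q hq)]
    rw [div_eq_mul_inv]; ring
  simp only [e]
  have t1 : Tendsto (fun K : ℕ => q ^ (K * (K + 1)) * ((-1) ^ K * (QQ (q ^ 2) K)⁻¹)) atTop (𝓝 0) := by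
    apply bdd_zero q hq C
    intro K
    rw [norm_mul, norm_pow, norm_neg, norm_one, one_pow, one_mul]; exact b4 K
  have t2 : Tendsto (fun K : ℕ => HH q K r) atTop (𝓝 0) := by
    have : ∀ j ∈ range r, Tendsto (fun K : ℕ => (1 + (q ^ 2) ^ (j + 1)) * (-1) ^ (K + j + 1) * q ^ (K * (K + 1)) /
      q ^ ((j + 1) * (j + 2)) * gg (q ^ 2) K (j + 1)) atTop (𝓝 0) := by
      intro j _
      have := (bdd_zero q hq (C ^ 3) (fun K => (-1) ^ (K + j + 1) * gg (q ^ 2) K (j + 1)) (by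
        intro K
        rw [norm_mul, norm_pow, norm_neg, norm_one, one_pow, one_mul]; exact hgg _ _)).const_mul
          ((1 + (q ^ 2) ^ (j + 1)) / q ^ ((j + 1) * (j + 2)))
      rw [mul_zero] at this
      refine this.congr (fun K => ?_)
      ring
    have h3 := tendsto_finsetSum _ this
    simpa [HH] using h3
  have := ((tendsto_const_nhds (x := (1 : ℂ))).sub t1).sub t2
  simpa using this.const_mul ((-1) ^ r * q ^ (r * (r + 1)))

open Filter Topology in
lemma G_eq (q : ℂ) (hq0 : q ≠ 0) (hq : ‖q‖ < 1) (l : ℕ) :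
    HasSum (fun r => ww l q r) (G (l + 2) q) := by
  obtain ⟨C, hC, b1, b2, b3, b4⟩ := all_bounds q hq
  have hr : 0 < 1 - ‖q‖ := by linarith
  have hee : ∀ K r, ‖ee (q ^ 2) K r‖ ≤ C ^ 3 := by
    intro a b
    unfold ee
    split_ifs
    · exact triple_bound C _ _ _ (b3 _) (b4 _) (b4 _)
    · simp; positivity
  have hSS : ∀ K r, ‖SS q K r‖ ≤ (1 - ‖q‖)⁻¹ * C ^ 3 := by
    intro K r
    unfold SS
    calc _ ≤ ∑ n ∈ range K, ‖q‖ ^ n * C ^ 3 := by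
          apply norm_sum_le_of_le
          intro n _
          rw [norm_mul, norm_mul, norm_pow, norm_neg, norm_one, one_pow, one_mul, norm_pow]
          have : ‖q‖ ^ (n * (n + 1)) ≤ ‖q‖ ^ n :=
            pow_le_pow_of_le_one (norm_nonneg _) hq.le (by nlinarith)
          gcongr
          exact hee _ _
      _ ≤ _ := by
          rw [← Finset.sum_mul]
          gcongr
          rw [← tsum_geometric_of_lt_one (norm_nonneg q) hq]
          exact (summable_geometric_of_lt_one (norm_nonneg q) hq).sum_le_tsum _ (fun i _ => by positivity)
  have hAA : ∀ r, ‖AA q l r‖ ≤ ‖q‖ ^ r * 2 := by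
    intro r
    unfold AA
    rw [norm_mul, norm_mul, norm_pow, norm_neg, norm_one, one_pow, one_mul, norm_pow]
    refine mul_le_mul ?_ ?_ (norm_nonneg _) (by positivity)
    · apply pow_le_pow_of_le_one (norm_nonneg _) hq.le
      have : r ≤ r ^ 2 := Nat.le_self_pow (by norm_num) r
      exact le_trans this (Nat.le_add_right _ _)
    · calc ‖1 - q ^ (2 * r + 1)‖ ≤ ‖(1 : ℂ)‖ + ‖q ^ (2 * r + 1)‖ := norm_sub_le _ _
        _ ≤ 1 + 1 := by
            rw [norm_one, norm_pow]; gcongr; exact pow_le_one₀ (norm_nonneg _) hq.le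
        _ = 2 := by norm_num
  have hsg := summable_geometric_of_lt_one (norm_nonneg q) hq
  have hww : ∀ r, ‖ww l q r‖ ≤ ‖q‖ ^ r * 2 := by
    intro r
    rw [← AA_ww, norm_mul, norm_mul, norm_pow (-1 : ℂ), norm_neg, norm_one, one_pow, one_mul, norm_pow]
    calc _ ≤ (‖q‖ ^ r * 2) * 1 := by
          gcongr
          · exact hAA r
          · exact pow_le_one₀ (norm_nonneg _) hq.le
      _ = _ := by ring
  have hsw : Summable (fun r => ww l q r) := Summable.of_norm_bounded (hsg.mul_right 2) hww
  have key : Tendsto (fun K => ∑' r, (if r < K then AA q l r * SS q K r else 0)) atTop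
      (𝓝 (∑' r, ww l q r)) := by
    apply tendsto_tsum_of_dominated_convergence (bound := fun r => ‖q‖ ^ r * (2 * ((1 - ‖q‖)⁻¹ * C ^ 3)))
    · exact hsg.mul_right _
    · intro r
      rw [← AA_ww]
      have := (SS_tendsto q hq0 hq r).const_mul (AA q l r)
      apply this.congr'
      filter_upwards [eventually_gt_atTop r] with K hK
      rw [if_pos hK]
    · filter_upwards with K r
      split_ifs
      · rw [norm_mul]
        calc _ ≤ (‖q‖ ^ r * 2) * ((1 - ‖q‖)⁻¹ * C ^ 3) := by
              gcongr
              · exact hAA r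
              · exact hSS K r
          _ = _ := by ring
      · simp; positivity
  have e : ∀ K, ∑' r, (if r < K then AA q l r * SS q K r else 0) = U (l + 2) K q := by
    intro K
    rw [U_eq q hq0 (one_sub_ne q hq), tsum_eq_sum (s := range K)]
    · apply Finset.sum_congr rfl; intro r hr; rw [if_pos (by simpa using hr)]
    · intro r hr; rw [if_neg (by simpa using hr)]
  simp only [e] at key
  rw [tendsto_nhds_unique (U_tendsto_G q hq l) key]
  exact hsw.hasSum

lemma root_pow_eq {ζ : ℂ} {N : ℕ} (h : ζ ^ N = 1) {a b : ℕ} (x y : ℕ) (e : a + N * x = b + N * y) :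
    ζ ^ a = ζ ^ b := by
  have h1 : ζ ^ (a + N * x) = ζ ^ a := by rw [pow_add, pow_mul, h, one_pow, mul_one]
  have h2 : ζ ^ (b + N * y) = ζ ^ b := by rw [pow_add, pow_mul, h, one_pow, mul_one]
  rw [← h1, ← h2, e]

lemma QQ_ne_root {p : ℂ} {N : ℕ} (hp : IsPrimitiveRoot p N) (n : ℕ) (hn : n < N) : QQ p n ≠ 0 := by
  induction n with
  | zero => simp [QQ_zero]
  | succ n ih =>
    rw [QQ_succ]
    refine mul_ne_zero (ih (by omega)) ?_
    have := hp.pow_ne_one_of_pos_of_lt (show n + 1 ≠ 0 by omega) hn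
    exact sub_ne_zero.mpr (Ne.symm this)

lemma QQ_order {p : ℂ} {n : ℕ} (hp : IsPrimitiveRoot p (n + 1)) : QQ p n = n + 1 := by
  rw [← hp.prod_one_sub_pow_eq_order]
  unfold QQ qPoch
  apply Finset.prod_congr rfl; intro i _; rw [pow_succ' p i]

lemma QQ_add (p : ℂ) (a b : ℕ) :
    QQ p (a + b) = QQ p a * ∏ i ∈ range b, (1 - p ^ (a + 1 + i)) := by
  induction b with
  | zero => simp
  | succ b ih => rw [← add_assoc, QQ_succ, ih, Finset.prod_range_succ]; ring

lemma neg_poch_ne {ζ : ℂ} {N : ℕ} (hζ : ζ ^ N = 1) (hN : Odd N) (n : ℕ) : qPoch (-ζ) ζ n ≠ 0 := by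
  unfold qPoch
  rw [Finset.prod_ne_zero_iff]
  intro j _ h
  have h1 : ζ ^ (j + 1) = -1 := by linear_combination h
  have h2 : (ζ ^ (j + 1)) ^ N = 1 := by rw [← pow_mul, mul_comm, pow_mul, hζ, one_pow]
  rw [h1, hN.neg_one_pow] at h2
  norm_num at h2

lemma qPoch_cont {f g : ℂ → ℂ} {z : ℂ} (hf : ContinuousAt f z) (hg : ContinuousAt g z) (n : ℕ) :
    ContinuousAt (fun q => qPoch (f q) (g q) n) z := by
  unfold qPoch
  fun_prop

lemma QQ_cont {f : ℂ → ℂ} {z : ℂ} (hf : ContinuousAt f z) (n : ℕ) :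
    ContinuousAt (fun q => QQ (f q) n) z := qPoch_cont hf hf n

lemma sq_prim {ζ : ℂ} {N : ℕ} (hζ : IsPrimitiveRoot ζ N) (hN : Odd N) : IsPrimitiveRoot (ζ ^ 2) N :=
  hζ.pow_of_coprime 2 (Nat.coprime_two_left.mpr hN)

lemma U_cont {ζ : ℂ} {N : ℕ} (hζ : IsPrimitiveRoot ζ N) (hN : Odd N) (m : ℕ) :
    ContinuousAt (fun q => U m N q) ζ := by
  unfold U
  refine tendsto_finsetSum _ ?_
  intro n hn
  rw [Fintype.mem_piFinset] at hn
  have hpad : ∀ j, pad (m - 1) n j < N := by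
    intro j
    unfold pad
    split_ifs with h
    · simpa using hn ⟨j, h⟩
    · exact hN.pos
  change ContinuousAt (fun q => Gterm m q (pad (m - 1) n)) ζ
  unfold Gterm
  have hp : ContinuousAt (fun q : ℂ => q ^ 2) ζ := by fun_prop
  apply ContinuousAt.mul
  · apply ContinuousAt.div
    · apply ContinuousAt.mul
      · fun_prop
      · exact qPoch_cont continuousAt_id hp _
    · exact qPoch_cont continuousAt_id.neg continuousAt_id _
    · exact neg_poch_ne hζ.pow_eq_one hN _
  · refine tendsto_finsetProd _ ?_
    intro i _
    change ContinuousAt (fun q => qBinom (q ^ 2) (pad (m - 1) n (i + 1)) (pad (m - 1) n i)) ζ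
    unfold qBinom
    split_ifs with h
    · apply ContinuousAt.div
      · exact QQ_cont hp _
      · exact (QQ_cont hp _).mul (QQ_cont hp _)
      · have h1 := hpad (i + 1)
        exact mul_ne_zero (QQ_ne_root (sq_prim hζ hN) _ (by omega)) (QQ_ne_root (sq_prim hζ hN) _ (hpad i))
    · exact continuousAt_const

/-- limit of the boundary coefficient -/
noncomputable def HL (ζ : ℂ) (N j : ℕ) : ℂ :=
  (1 + (ζ ^ 2) ^ j) * (-1) ^ (N + j) / ζ ^ (j * (j + 1)) / (QQ (ζ ^ 2) (N - j) * QQ (ζ ^ 2) j)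

lemma HL_anti {ζ : ℂ} {N : ℕ} (hζ : IsPrimitiveRoot ζ N) (hN : Odd N) (i j : ℕ) (e : i + j = N) :
    HL ζ N i = - HL ζ N j := by
  have h0 : ζ ≠ 0 := hζ.ne_zero hN.pos.ne'
  have hp := hζ.pow_eq_one
  unfold HL
  rw [show N - i = j by omega, show N - j = i by omega, mul_comm (QQ (ζ ^ 2) j), ← neg_div]
  congr 1
  rw [← neg_div, div_eq_div_iff (pow_ne_zero _ h0) (pow_ne_zero _ h0)]
  have s1 : (-1 : ℂ) ^ (N + i) = (-1) ^ j := by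
    rw [show N + i = 2 * i + j by omega, pow_add, pow_mul]; simp
  have s2 : (-1 : ℂ) ^ (N + j) = - (-1) ^ j := by
    rw [pow_add, hN.neg_one_pow]; ring
  have r1 : ζ ^ (j * (j + 1)) = ζ ^ (2 * j + i * (i + 1)) :=
    root_pow_eq hp (i + 1) j (by subst e; ring)
  have r2 : ζ ^ (2 * i + j * (j + 1)) = ζ ^ (i * (i + 1)) :=
    root_pow_eq hp i (j + 1) (by subst e; ring)
  rw [pow_add, pow_mul] at r1 r2
  rw [s1, s2]
  linear_combination (-1) ^ j * r1 + (-1) ^ j * r2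

/-- limit of the boundary sum -/
noncomputable def HHL (ζ : ℂ) (N r : ℕ) : ℂ := ∑ j ∈ range r, HL ζ N (j + 1)

lemma HHL_refl {ζ : ℂ} {n : ℕ} (hζ : IsPrimitiveRoot ζ (n + 1)) (hN : Odd (n + 1)) (r : ℕ) (hr : r ≤ n) :
    HHL ζ (n + 1) (n - r) = HHL ζ (n + 1) r := by
  have h : ∀ r ≤ n, HHL ζ (n + 1) (n - r) = HHL ζ (n + 1) r + HHL ζ (n + 1) n := by
    intro r
    induction r with
    | zero => intro _; simp [HHL]
    | succ r ih =>
      intro hr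
      have a1 := ih (by omega)
      obtain ⟨s, hs⟩ : ∃ s, n - r = s + 1 := ⟨n - r - 1, by omega⟩
      have hs2 : n - (r + 1) = s := by omega
      rw [hs] at a1
      rw [hs2]
      have b1 : HHL ζ (n + 1) (s + 1) = HHL ζ (n + 1) s + HL ζ (n + 1) (s + 1) := by
        unfold HHL; rw [Finset.sum_range_succ]
      have b2 : HHL ζ (n + 1) (r + 1) = HHL ζ (n + 1) r + HL ζ (n + 1) (r + 1) := by
        unfold HHL; rw [Finset.sum_range_succ]
      have b3 := HL_anti hζ hN (s + 1) (r + 1) (by omega)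
      linear_combination a1 - b1 - b2 - b3
  have h1 := h n le_rfl
  rw [Nat.sub_self] at h1
  have h2 : HHL ζ (n + 1) 0 = 0 := by simp [HHL]
  have h3 : HHL ζ (n + 1) n = 0 := by linear_combination (h2 - h1) / 2
  rw [h r hr, h3, add_zero]

/-- theta coefficient -/
noncomputable def cc (l : ℕ) (ζ : ℂ) (r : ℕ) : ℂ := ζ ^ (2 * (l + 1) * r ^ 2 + (2 * l + 1) * r)
/-- theta coefficient, second kind -/
noncomputable def dd (l : ℕ) (ζ : ℂ) (r : ℕ) : ℂ := ζ ^ (2 * (l + 1) * r ^ 2 + (2 * l + 3) * r + 1)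

lemma ww_cd (l : ℕ) (ζ : ℂ) (r : ℕ) : ww l ζ r = cc l ζ r - dd l ζ r := by
  unfold ww cc dd; ring

lemma cc_refl {ζ : ℂ} {n : ℕ} (hζ : ζ ^ (n + 1) = 1) (l r : ℕ) (hr : r ≤ n) :
    cc l ζ (n - r) = dd l ζ r := by
  obtain ⟨s, rfl⟩ := Nat.exists_eq_add_of_le hr
  rw [show r + s - r = s by omega]
  unfold cc dd
  apply root_pow_eq hζ (2 * (l + 1) * r + 1) (2 * (l + 1) * s)
  ring

lemma ww_refl {ζ : ℂ} {n : ℕ} (hζ : ζ ^ (n + 1) = 1) (l r : ℕ) (hr : r ≤ n) :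
    ww l ζ (n - r) = - ww l ζ r := by
  have h1 := cc_refl hζ l r hr
  have h2 := cc_refl hζ l (n - r) (by omega)
  rw [show n - (n - r) = r by omega] at h2
  rw [ww_cd, ww_cd, h1, h2]; ring

lemma ww_HHL {ζ : ℂ} {n : ℕ} (hζ : IsPrimitiveRoot ζ (n + 1)) (hN : Odd (n + 1)) (l : ℕ) :
    ∑ r ∈ range (n + 1), ww l ζ r * HHL ζ (n + 1) r = 0 := by
  have h := Finset.sum_range_reflect (fun r => ww l ζ r * HHL ζ (n + 1) r) (n + 1)
  have h2 : ∑ r ∈ range (n + 1), ww l ζ (n + 1 - 1 - r) * HHL ζ (n + 1) (n + 1 - 1 - r) =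
      - ∑ r ∈ range (n + 1), ww l ζ r * HHL ζ (n + 1) r := by
    rw [← Finset.sum_neg_distrib]
    apply Finset.sum_congr rfl
    intro r hr
    have hr' : r ≤ n := by simpa [Nat.lt_succ_iff] using hr
    rw [show n + 1 - 1 - r = n - r by omega, ww_refl hζ.pow_eq_one l r hr', HHL_refl hζ hN r hr']
    ring
  linear_combination (h2 - h) / 2

lemma ww_sum {ζ : ℂ} {n : ℕ} (hζ : ζ ^ (n + 1) = 1) (l : ℕ) :
    ∑ r ∈ range (n + 1), ww l ζ r = 0 := by
  have h := Finset.sum_range_reflect (fun r => ww l ζ r) (n + 1)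
  have h2 : ∑ r ∈ range (n + 1), ww l ζ (n + 1 - 1 - r) =
      - ∑ r ∈ range (n + 1), ww l ζ r := by
    rw [← Finset.sum_neg_distrib]
    apply Finset.sum_congr rfl
    intro r hr
    have hr' : r ≤ n := by simpa [Nat.lt_succ_iff] using hr
    rw [show n + 1 - 1 - r = n - r by omega, ww_refl hζ l r hr']
  linear_combination (h2 - h) / 2

open Filter Topology in
lemma HH_lim {ζ : ℂ} {N : ℕ} (hζ : IsPrimitiveRoot ζ N) (hN : Odd N) (q : ℝ → ℂ) (L : Filter ℝ)
    (hq : Tendsto q L (𝓝 ζ)) (hne : ∀ᶠ t in L, ∀ n : ℕ, 1 - (q t ^ 2) ^ (n + 1) ≠ 0)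
    (r : ℕ) (hr : r < N) : Tendsto (fun t => HH (q t) N r) L (𝓝 (HHL ζ N r)) := by
  unfold HH HHL
  refine tendsto_finsetSum _ ?_
  intro j hj
  have hj' : j < r := by simpa using hj
  have h0 : ζ ≠ 0 := hζ.ne_zero hN.pos.ne'
  have hp : ContinuousAt (fun q : ℂ => q ^ 2) ζ := by fun_prop
  have hprod : ∏ i ∈ range (j + 1), (1 - (ζ ^ 2) ^ (N + 1 + i)) = QQ (ζ ^ 2) (j + 1) := by
    unfold QQ qPoch
    apply Finset.prod_congr rfl
    intro i _
    rw [show N + 1 + i = N + (i + 1) by omega, pow_add, (sq_prim hζ hN).pow_eq_one]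
    ring
  have hc : ContinuousAt (fun q : ℂ => (1 + (q ^ 2) ^ (j + 1)) * (-1) ^ (N + j + 1) * q ^ (N * (N + 1)) /
    q ^ ((j + 1) * (j + 2)) * (1 / (QQ (q ^ 2) (N - (j + 1)) *
      ∏ i ∈ range (j + 1), (1 - (q ^ 2) ^ (N + 1 + i))))) ζ := by
    apply ContinuousAt.mul
    · apply ContinuousAt.div
      · fun_prop
      · fun_prop
      · exact pow_ne_zero _ h0
    · apply ContinuousAt.div
      · fun_prop
      · apply (QQ_cont hp _).mul
        fun_prop
      · rw [hprod]
        exact mul_ne_zero (QQ_ne_root (sq_prim hζ hN) _ (by omega)) (QQ_ne_root (sq_prim hζ hN) _ (by omega))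
  have h1 := hc.tendsto.comp hq
  have e1 : HL ζ N (j + 1) = (1 + (ζ ^ 2) ^ (j + 1)) * (-1) ^ (N + j + 1) * ζ ^ (N * (N + 1)) /
    ζ ^ ((j + 1) * (j + 2)) * (1 / (QQ (ζ ^ 2) (N - (j + 1)) *
      ∏ i ∈ range (j + 1), (1 - (ζ ^ 2) ^ (N + 1 + i)))) := by
    rw [hprod, pow_mul ζ N, hζ.pow_eq_one, one_pow]
    unfold HL
    rw [mul_one, ← add_assoc, show j + 1 + 1 = j + 2 by omega]
    rw [div_eq_mul_one_div _ (QQ (ζ ^ 2) (N - (j + 1)) * _)]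
  rw [e1]
  refine h1.congr' ?_
  filter_upwards [hne] with t ht
  simp only [Function.comp]
  congr 1
  unfold gg
  rw [if_pos (by omega), QQ_add]
  have := QQ_ne _ ht N
  rw [mul_left_comm]
  conv_rhs => rw [div_mul_eq_div_div, div_self this]

/-- radial path -/
noncomputable def qt (ζ : ℂ) (t : ℝ) : ℂ := ζ * Complex.exp (-(t : ℂ))

lemma qt_pow (ζ : ℂ) (t : ℝ) (n : ℕ) : qt ζ t ^ n = ζ ^ n * Complex.exp (-(n * (t : ℂ))) := by
  unfold qt
  rw [mul_pow, ← Complex.exp_nat_mul]; congr 2; ring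

lemma qt_norm {ζ : ℂ} (hζ : ‖ζ‖ = 1) (t : ℝ) (ht : 0 < t) : ‖qt ζ t‖ < 1 := by
  unfold qt
  rw [norm_mul, hζ, one_mul, ← Complex.ofReal_neg, Complex.norm_exp_ofReal, Real.exp_lt_one_iff]
  linarith

lemma qt_zero (ζ : ℂ) : qt ζ 0 = ζ := by simp [qt]

open Filter Topology in
lemma qt_lim (ζ : ℂ) : Tendsto (qt ζ) (𝓝[>] 0) (𝓝 ζ) := by
  have : Continuous (qt ζ) := by unfold qt; fun_prop
  have h := this.tendsto 0
  rw [qt_zero] at h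
  exact h.mono_left nhdsWithin_le_nhds

lemma deriv_aux (a E : ℂ) : HasDerivAt (fun t : ℝ => a * Complex.exp (-(E * (t : ℂ)))) (-(a * E)) 0 := by
  have h1 : HasDerivAt (fun z : ℂ => a * Complex.exp (-(E * z))) (-(a * E)) ((0 : ℝ) : ℂ) := by
    have h2 : HasDerivAt (fun z : ℂ => -(E * z)) (-(E * 1)) ((0 : ℝ) : ℂ) :=
      ((hasDerivAt_id _).const_mul E).neg
    have h3 := h2.cexp.const_mul a
    have e : -(a * E) = a * (Complex.exp (-(E * ((0 : ℝ) : ℂ))) * -(E * 1)) := by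
      rw [Complex.ofReal_zero, mul_zero, neg_zero, Complex.exp_zero]; ring
    rw [e]; exact h3
  exact h1.comp_ofReal

open Filter Topology in
lemma quot_lim {ζ : ℂ} {n : ℕ} (hζ : ζ ^ (n + 1) = 1) (l : ℕ) :
    Tendsto (fun t => (∑ r ∈ range (n + 1), ww l (qt ζ t) r) / (1 - (qt ζ t ^ 2) ^ (n + 1))) (𝓝[>] 0)
      (𝓝 (∑ r ∈ range (n + 1), cc l ζ r * ((l + 1) * (n - 2 * r) + 1 / 2))) := by
  have hN : (n : ℂ) + 1 ≠ 0 := by exact_mod_cast Nat.succ_ne_zero n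
  have hP : HasDerivAt (fun t => ∑ r ∈ range (n + 1), ww l (qt ζ t) r)
      (∑ r ∈ range (n + 1), (-(cc l ζ r * ((2 * (l + 1) * r ^ 2 + (2 * l + 1) * r : ℕ) : ℂ)) -
        -(dd l ζ r * ((2 * (l + 1) * r ^ 2 + (2 * l + 3) * r + 1 : ℕ) : ℂ)))) 0 := by
    apply HasDerivAt.fun_sum
    intro r _
    have e : (fun t => ww l (qt ζ t) r) = fun t : ℝ =>
        cc l ζ r * Complex.exp (-(((2 * (l + 1) * r ^ 2 + (2 * l + 1) * r : ℕ) : ℂ) * (t : ℂ))) -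
        dd l ζ r * Complex.exp (-(((2 * (l + 1) * r ^ 2 + (2 * l + 3) * r + 1 : ℕ) : ℂ) * (t : ℂ))) := by
      funext t
      rw [ww_cd]
      unfold cc dd
      rw [qt_pow, qt_pow]
    rw [e]
    exact (deriv_aux _ _).sub (deriv_aux _ _)
  have hD : HasDerivAt (fun t => 1 - (qt ζ t ^ 2) ^ (n + 1)) (2 * ((n : ℂ) + 1)) 0 := by
    have e : (fun t => 1 - (qt ζ t ^ 2) ^ (n + 1)) = fun t : ℝ =>
        1 - 1 * Complex.exp (-(((2 * (n + 1) : ℕ) : ℂ) * (t : ℂ))) := by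
      funext t
      rw [← pow_mul, qt_pow, mul_comm 2, pow_mul, hζ, one_pow]
    rw [e]
    have e3 : 2 * ((n : ℂ) + 1) = -(-(1 * ((2 * (n + 1) : ℕ) : ℂ))) := by push_cast; ring
    rw [e3]
    exact (deriv_aux 1 _).const_sub 1
  have t1 := hP.tendsto_slope_zero_right
  have t2 := hD.tendsto_slope_zero_right
  have t3 := t1.div t2 (mul_ne_zero two_ne_zero hN)
  have e2 : (∑ r ∈ range (n + 1), (-(cc l ζ r * ((2 * (l + 1) * r ^ 2 + (2 * l + 1) * r : ℕ) : ℂ)) -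
        -(dd l ζ r * ((2 * (l + 1) * r ^ 2 + (2 * l + 3) * r + 1 : ℕ) : ℂ)))) / (2 * ((n : ℂ) + 1)) =
        ∑ r ∈ range (n + 1), cc l ζ r * ((l + 1) * (n - 2 * r) + 1 / 2) := by
    have h := Finset.sum_range_reflect
      (fun r => dd l ζ r * ((2 * (l + 1) * r ^ 2 + (2 * l + 3) * r + 1 : ℕ) : ℂ)) (n + 1)
    rw [Finset.sum_sub_distrib, Finset.sum_neg_distrib (f := fun r => dd l ζ r * _), ← h,
      ← Finset.sum_neg_distrib, ← Finset.sum_sub_distrib, Finset.sum_div]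
    apply Finset.sum_congr rfl
    intro r hr
    have hr' : r ≤ n := by simpa [Nat.lt_succ_iff] using hr
    rw [show n + 1 - 1 - r = n - r by omega]
    have h2 := cc_refl hζ l (n - r) (by omega)
    rw [show n - (n - r) = r by omega] at h2
    rw [← h2]
    push_cast [Nat.cast_sub hr']
    field_simp
    ring
  rw [e2] at t3
  refine t3.congr' ?_
  filter_upwards [self_mem_nhdsWithin] with t ht
  have ht' : (t : ℂ) ≠ 0 := by
    have : (0 : ℝ) < t := ht
    exact_mod_cast this.ne'
  simp only [zero_add, qt_zero, ww_sum hζ, sub_zero, Pi.div_apply]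
  rw [← pow_mul ζ, mul_comm 2, pow_mul ζ, hζ, one_pow, sub_self, sub_zero]
  simp only [Complex.real_smul, Complex.ofReal_inv]
  rw [mul_div_mul_left _ _ (inv_ne_zero ht')]

open Filter Topology in
lemma U_val {ζ : ℂ} {n : ℕ} (hζ : IsPrimitiveRoot ζ (n + 1)) (hN : Odd (n + 1)) (hnorm : ‖ζ‖ = 1) (l : ℕ) :
    U (l + 2) (n + 1) ζ =
      (∑ r ∈ range (n + 1), cc l ζ r * ((l + 1) * (n - 2 * r) + 1 / 2)) / ((n : ℂ) + 1) := by
  have hne0 : ζ ≠ 0 := hζ.ne_zero hN.pos.ne'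
  have hNz : (n : ℂ) + 1 ≠ 0 := by exact_mod_cast Nat.succ_ne_zero n
  have hne : ∀ᶠ t in 𝓝[>] (0 : ℝ), ∀ n : ℕ, 1 - (qt ζ t ^ 2) ^ (n + 1) ≠ 0 := by
    filter_upwards [self_mem_nhdsWithin] with t ht
    exact one_sub_ne _ (qt_norm hnorm t ht)
  have hp : ContinuousAt (fun q : ℂ => q ^ 2) ζ := by fun_prop
  have hU : Tendsto (fun t => U (l + 2) (n + 1) (qt ζ t)) (𝓝[>] 0) (𝓝 (U (l + 2) (n + 1) ζ)) :=
    (U_cont hζ hN (l + 2)).tendsto.comp (qt_lim ζ)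
  have hP : Tendsto (fun t => ∑ r ∈ range (n + 1), ww l (qt ζ t) r) (𝓝[>] 0) (𝓝 0) := by
    rw [← ww_sum hζ.pow_eq_one l]
    have hc : ContinuousAt (fun q : ℂ => ∑ r ∈ range (n + 1), ww l q r) ζ := by
      unfold ww; fun_prop
    exact hc.tendsto.comp (qt_lim ζ)
  have hH : Tendsto (fun t => ∑ r ∈ range (n + 1), ww l (qt ζ t) r * HH (qt ζ t) (n + 1) r) (𝓝[>] 0) (𝓝 0) := by
    rw [← ww_HHL hζ hN l]
    refine tendsto_finsetSum _ ?_
    intro r hr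
    have hc : ContinuousAt (fun q : ℂ => ww l q r) ζ := by
      unfold ww; fun_prop
    exact (hc.tendsto.comp (qt_lim ζ)).mul (HH_lim hζ hN (qt ζ) _ (qt_lim ζ) hne r (by simpa using hr))
  have hR : Tendsto (fun t => qt ζ t ^ ((n + 1) * (n + 2)) / QQ (qt ζ t ^ 2) n) (𝓝[>] 0) (𝓝 (1 / ((n : ℂ) + 1))) := by
    have hc : ContinuousAt (fun q : ℂ => q ^ ((n + 1) * (n + 2)) / QQ (q ^ 2) n) ζ := by
      apply ContinuousAt.div
      · fun_prop
      · exact QQ_cont hp _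
      · exact QQ_ne_root (sq_prim hζ hN) _ (by omega)
    have := hc.tendsto.comp (qt_lim ζ)
    rw [pow_mul ζ, hζ.pow_eq_one, one_pow, QQ_order (sq_prim hζ hN)] at this
    exact this
  have hT := (hP.add ((quot_lim hζ.pow_eq_one l).mul hR)).sub hH
  rw [zero_add, sub_zero, mul_one_div] at hT
  refine tendsto_nhds_unique hU (hT.congr' ?_)
  filter_upwards [hne, self_mem_nhdsWithin] with t ht ht0
  have hq0 : qt ζ t ≠ 0 := mul_ne_zero hne0 (Complex.exp_ne_zero _)
  rw [U_closed _ hq0 ht, QQ_succ, hN.neg_one_pow]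
  congr 1
  have a1 := QQ_ne _ ht n
  have a2 := ht n
  rw [show n + 1 + 1 = n + 2 by omega]
  field_simp
  ring

lemma gauss_d2 (τ y : ℝ) (hτ : 0 < τ) :
    ‖-(2 * τ) * Real.exp (-(τ * y ^ 2)) + -(2 * τ * y) * (Real.exp (-(τ * y ^ 2)) * -(τ * (2 * y)))‖ ≤ 6 * τ ∧
    ‖-(2 * τ) * Real.exp (-(τ * y ^ 2)) + -(2 * τ * y) * (Real.exp (-(τ * y ^ 2)) * -(τ * (2 * y)))‖ * y ^ 2 ≤ 10 := by
  set u := τ * y ^ 2 with hu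
  have hu0 : 0 ≤ u := by positivity
  have hE := Real.exp_pos (-u)
  have h1 : u * Real.exp (-u) ≤ 1 := by
    have := Real.add_one_le_exp u
    have h2 : Real.exp u * Real.exp (-u) = 1 := by rw [← Real.exp_add]; simp
    nlinarith
  have h2 : u ^ 2 * Real.exp (-u) ≤ 2 := by
    have := Real.quadratic_le_exp_of_nonneg hu0
    have h2 : Real.exp u * Real.exp (-u) = 1 := by rw [← Real.exp_add]; simp
    nlinarith
  have h3 : Real.exp (-u) ≤ 1 := by rw [Real.exp_le_one_iff]; linarith
  have e : -(2 * τ) * Real.exp (-u) + -(2 * τ * y) * (Real.exp (-u) * -(τ * (2 * y))) =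
      2 * τ * (2 * (u * Real.exp (-u)) - Real.exp (-u)) := by rw [hu]; ring
  have hb : ‖-(2 * τ) * Real.exp (-u) + -(2 * τ * y) * (Real.exp (-u) * -(τ * (2 * y)))‖ ≤
      2 * τ * (2 * (u * Real.exp (-u)) + Real.exp (-u)) := by
    rw [e, Real.norm_eq_abs, abs_le]
    have : 0 ≤ u * Real.exp (-u) := by positivity
    constructor <;> nlinarith [mul_nonneg hτ.le this, mul_nonneg hτ.le hE.le]
  constructor
  · refine hb.trans ?_
    nlinarith
  · calc _ ≤ 2 * τ * (2 * (u * Real.exp (-u)) + Real.exp (-u)) * y ^ 2 := by gcongr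
      _ = 4 * (u ^ 2 * Real.exp (-u)) + 2 * (u * Real.exp (-u)) := by rw [hu]; ring
      _ ≤ 10 := by linarith

/-- the gaussian -/
noncomputable def gf (τ y : ℝ) : ℝ := Real.exp (-(τ * y ^ 2))

lemma gf_deriv (τ y : ℝ) : HasDerivAt (gf τ) (-(2 * τ * y) * gf τ y) y := by
  have h2 : HasDerivAt (fun y : ℝ => -(τ * y ^ 2)) (-(τ * (2 * y))) y := by
    have := ((hasDerivAt_pow 2 y).const_mul τ).fun_neg
    simpa using this
  have h3 := h2.exp
  have e : -(2 * τ * y) * gf τ y = Real.exp (-(τ * y ^ 2)) * -(τ * (2 * y)) := by unfold gf; ring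
  rw [e]; exact h3

lemma gf_deriv2 (τ y : ℝ) : HasDerivAt (fun y => -(2 * τ * y) * gf τ y)
    (-(2 * τ) * Real.exp (-(τ * y ^ 2)) + -(2 * τ * y) * (Real.exp (-(τ * y ^ 2)) * -(τ * (2 * y)))) y := by
  have h1 : HasDerivAt (fun y : ℝ => -(2 * τ * y)) (-(2 * τ)) y := by
    have := ((hasDerivAt_id y).const_mul (2 * τ)).fun_neg
    simpa using this
  have h2 : HasDerivAt (gf τ) (Real.exp (-(τ * y ^ 2)) * -(τ * (2 * y))) y := by
    have := gf_deriv τ y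
    have e : -(2 * τ * y) * gf τ y = Real.exp (-(τ * y ^ 2)) * -(τ * (2 * y)) := by unfold gf; ring
    rw [e] at this; exact this
  exact h1.mul h2

/-- error term -/
noncomputable def herr (x τ : ℝ) (d : ℕ) : ℝ :=
  gf τ (d + x) - gf τ (d + 1 - x) - (1 - 2 * x) * (gf τ d - gf τ (d + 1))

lemma herr_le (x τ : ℝ) (hx0 : 0 ≤ x) (hx1 : x ≤ 1) (d : ℕ) (B : ℝ)
    (hB : ∀ y ∈ Set.Icc (d : ℝ) (d + 1), ‖-(2 * τ) * Real.exp (-(τ * y ^ 2)) +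
      -(2 * τ * y) * (Real.exp (-(τ * y ^ 2)) * -(τ * (2 * y)))‖ ≤ B) : ‖herr x τ d‖ ≤ 2 * B := by
  have hconv : Convex ℝ (Set.Icc (d : ℝ) (d + 1)) := convex_Icc _ _
  have hB0 : 0 ≤ B := le_trans (norm_nonneg _) (hB d (by simp))
  have hd : (d : ℝ) ∈ Set.Icc (d : ℝ) (d + 1) := by simp
  have hd1 : (d : ℝ) + 1 ∈ Set.Icc (d : ℝ) (d + 1) := by simp
  have g1 : ∀ y ∈ Set.Icc (d : ℝ) (d + 1), ‖-(2 * τ * y) * gf τ y - -(2 * τ * d) * gf τ d‖ ≤ B := by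
    intro y hy
    have h := hconv.norm_image_sub_le_of_norm_hasDerivWithin_le
      (fun y _ => (gf_deriv2 τ y).hasDerivWithinAt) hB hd hy
    have h2 : ‖y - d‖ ≤ 1 := by
      rw [Real.norm_eq_abs, abs_le]; constructor <;> linarith [hy.1, hy.2]
    calc _ ≤ B * ‖y - d‖ := h
      _ ≤ B * 1 := by gcongr
      _ = B := mul_one B
  have g2 : ∀ y ∈ Set.Icc (d : ℝ) (d + 1), ∀ z ∈ Set.Icc (d : ℝ) (d + 1),
      ‖(gf τ z - (-(2 * τ * d) * gf τ d) * z) - (gf τ y - (-(2 * τ * d) * gf τ d) * y)‖ ≤ B := by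
    intro y hy z hz
    have h := hconv.norm_image_sub_le_of_norm_hasDerivWithin_le
      (f := fun y => gf τ y - (-(2 * τ * d) * gf τ d) * y)
      (f' := fun y => -(2 * τ * y) * gf τ y - -(2 * τ * d) * gf τ d) (C := B)
      (fun y _ => by
        have := ((gf_deriv τ y).sub ((hasDerivAt_id y).const_mul (-(2 * τ * d) * gf τ d)))
        rw [mul_one] at this
        exact this.hasDerivWithinAt) g1 hy hz
    have h2 : ‖z - y‖ ≤ 1 := by
      rw [Real.norm_eq_abs, abs_le]; constructor <;> linarith [hy.1, hy.2, hz.1, hz.2]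
    calc _ ≤ B * ‖z - y‖ := h
      _ ≤ B * 1 := by gcongr
      _ = B := mul_one B
  have a1 := g2 (d + 1 - x) ⟨by linarith, by linarith⟩ (d + x) ⟨by linarith, by linarith⟩
  have a2 := g2 (d + 1) hd1 d hd
  set c := -(2 * τ * d) * gf τ d
  have e : herr x τ d = ((gf τ (d + x) - c * (d + x)) - (gf τ (d + 1 - x) - c * (d + 1 - x))) -
      (1 - 2 * x) * ((gf τ d - c * d) - (gf τ (d + 1) - c * (d + 1))) := by
    unfold herr; ring
  rw [e]
  refine (norm_sub_le _ _).trans ?_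
  rw [norm_mul]
  have h3 : ‖1 - 2 * x‖ ≤ 1 := by
    rw [Real.norm_eq_abs, abs_le]; constructor <;> linarith
  calc _ ≤ B + 1 * B := by gcongr
    _ = 2 * B := by ring

lemma herr_b1 (x τ : ℝ) (hx0 : 0 ≤ x) (hx1 : x ≤ 1) (hτ : 0 < τ) (d : ℕ) : ‖herr x τ d‖ ≤ 12 * τ := by
  have := herr_le x τ hx0 hx1 d (6 * τ) (fun y _ => (gauss_d2 τ y hτ).1)
  linarith

lemma herr_b2 (x τ : ℝ) (hx0 : 0 ≤ x) (hx1 : x ≤ 1) (hτ : 0 < τ) (d : ℕ) :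
    ‖herr x τ d‖ ≤ (24 * τ + 40) * (1 / ((d + 1 : ℕ) : ℝ) ^ 2) := by
  have := herr_le x τ hx0 hx1 d ((12 * τ + 20) / ((d + 1 : ℕ) : ℝ) ^ 2) (fun y hy => ?_)
  · calc _ ≤ _ := this
      _ = _ := by ring
  · obtain ⟨h1, h2⟩ := gauss_d2 τ y hτ
    rw [le_div_iff₀ (by positivity)]
    push_cast
    have hy1 : ((d : ℝ) + 1) ^ 2 ≤ 2 + 2 * y ^ 2 := by
      have h0 : (0 : ℝ) ≤ d := Nat.cast_nonneg d
      nlinarith [hy.1, sq_nonneg (y - 1)]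
    calc _ ≤ ‖-(2 * τ) * Real.exp (-(τ * y ^ 2)) +
      -(2 * τ * y) * (Real.exp (-(τ * y ^ 2)) * -(τ * (2 * y)))‖ * (2 + 2 * y ^ 2) := by gcongr
      _ ≤ _ := by nlinarith

lemma inv_sq_summable : Summable (fun d : ℕ => 1 / ((d + 1 : ℕ) : ℝ) ^ 2) :=
  (summable_nat_add_iff (f := fun d : ℕ => 1 / (d : ℝ) ^ 2) 1).mpr
    (Real.summable_one_div_nat_pow.mpr (by norm_num))

open Filter Topology in
lemma gf_tele (τ : ℝ) (hτ : 0 < τ) : HasSum (fun d : ℕ => gf τ d - gf τ (d + 1)) 1 := by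
  rw [hasSum_iff_tendsto_nat_of_nonneg]
  · have e : ∀ n : ℕ, ∑ d ∈ range n, (gf τ d - gf τ (d + 1)) = gf τ 0 - gf τ n := by
      intro n
      have := Finset.sum_range_sub' (fun d : ℕ => gf τ d) n
      simpa using this
    simp only [e]
    have h0 : gf τ 0 = 1 := by simp [gf]
    have h1 : Tendsto (fun n : ℕ => gf τ n) atTop (𝓝 0) := by
      unfold gf
      refine Real.tendsto_exp_atBot.comp ?_
      refine tendsto_neg_atTop_atBot.comp ?_
      refine Tendsto.const_mul_atTop hτ ?_
      exact (tendsto_pow_atTop (by norm_num)).comp tendsto_natCast_atTop_atTop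
    simpa [h0] using h1.const_sub 1
  · intro d
    unfold gf
    rw [sub_nonneg]
    apply Real.exp_le_exp.mpr
    have h0 : (0 : ℝ) ≤ d := Nat.cast_nonneg d
    nlinarith

open Filter Topology in
lemma false_theta (x : ℝ) (hx0 : 0 ≤ x) (hx1 : x ≤ 1) :
    ∃ S : ℝ → ℝ, Tendsto S (𝓝[>] 0) (𝓝 (1 - 2 * x)) ∧
      ∀ τ, 0 < τ → HasSum (fun d : ℕ => gf τ (d + x) - gf τ (d + 1 - x)) (S τ) := by
  refine ⟨fun τ => ∑' d, herr x τ d + (1 - 2 * x), ?_, ?_⟩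
  · have h : Tendsto (fun τ => ∑' d, herr x τ d) (𝓝[>] 0) (𝓝 (∑' _d : ℕ, (0 : ℝ))) := by
      apply tendsto_tsum_of_dominated_convergence (bound := fun d : ℕ => 64 * (1 / ((d + 1 : ℕ) : ℝ) ^ 2))
      · exact inv_sq_summable.mul_left _
      · intro d
        apply squeeze_zero_norm' (a := fun τ => 12 * τ)
        · filter_upwards [self_mem_nhdsWithin] with τ hτ
          exact herr_b1 x τ hx0 hx1 hτ d
        · have : Tendsto (fun τ : ℝ => 12 * τ) (𝓝 0) (𝓝 (12 * 0)) := (continuous_const.mul continuous_id).tendsto 0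
          rw [mul_zero] at this
          exact this.mono_left nhdsWithin_le_nhds
      · filter_upwards [Ioo_mem_nhdsGT (show (0 : ℝ) < 1 by norm_num)] with τ hτ d
        refine (herr_b2 x τ hx0 hx1 hτ.1 d).trans ?_
        gcongr
        linarith [hτ.2]
    rw [tsum_zero] at h
    simpa using h.add_const (1 - 2 * x)
  · intro τ hτ
    have hs : Summable (fun d => herr x τ d) :=
      Summable.of_norm_bounded (inv_sq_summable.mul_left _) (herr_b2 x τ hx0 hx1 hτ)
    have := hs.hasSum.add ((gf_tele τ hτ).mul_left (1 - 2 * x))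
    rw [mul_one] at this
    refine this.congr_fun ?_
    intro d
    unfold herr; ring

lemma sum_range_blocks (N D : ℕ) (f : ℕ → ℂ) :
    ∑ s ∈ range (D * N), f s = ∑ d ∈ range D, ∑ r ∈ range N, f (d * N + r) := by
  induction D with
  | zero => simp
  | succ D ih => rw [Nat.succ_mul, Finset.sum_range_add, ih, Finset.sum_range_succ]

/-- shift parameter -/
noncomputable def xx (l N r : ℕ) : ℝ := (4 * (l + 1) * r + 2 * l + 1) / (4 * (l + 1) * N)
/-- constant exponent -/
noncomputable def kap (l : ℕ) : ℝ := (2 * l + 1) ^ 2 / (8 * (l + 1))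

lemma cc_qt {ζ : ℂ} {n : ℕ} (hζ : ζ ^ (n + 1) = 1) (l d r : ℕ) (t : ℝ) :
    cc l (qt ζ t) (d * (n + 1) + r) = cc l ζ r *
      ((Real.exp (t * kap l) * gf (t * (2 * (l + 1) * (n + 1 : ℕ) ^ 2)) (d + xx l (n + 1) r) : ℝ) : ℂ) := by
  have e1 : ζ ^ (2 * (l + 1) * (d * (n + 1) + r) ^ 2 + (2 * l + 1) * (d * (n + 1) + r)) =
      ζ ^ (2 * (l + 1) * r ^ 2 + (2 * l + 1) * r) := by
    apply root_pow_eq hζ 0 (2 * (l + 1) * (d ^ 2 * (n + 1) + 2 * d * r) + (2 * l + 1) * d)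
    ring
  unfold cc
  rw [qt_pow, e1]
  congr 1
  unfold gf
  rw [← Real.exp_add, Complex.ofReal_exp]
  congr 1
  have h1 : (n : ℝ) + 1 ≠ 0 := by positivity
  have h2 : (l : ℝ) + 1 ≠ 0 := by positivity
  have h : -(((2 * (l + 1) * (d * (n + 1) + r) ^ 2 + (2 * l + 1) * (d * (n + 1) + r) : ℕ) : ℝ) * t) =
      t * kap l + -(t * (2 * (l + 1) * (n + 1 : ℕ) ^ 2) * (d + xx l (n + 1) r) ^ 2) := by
    unfold kap xx
    push_cast
    field_simp
    ring
  rw [← h]; push_cast; ring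

lemma dd_qt {ζ : ℂ} {n : ℕ} (hζ : ζ ^ (n + 1) = 1) (l d r : ℕ) (hr : r ≤ n) (t : ℝ) :
    dd l (qt ζ t) (d * (n + 1) + (n - r)) = cc l ζ r *
      ((Real.exp (t * kap l) * gf (t * (2 * (l + 1) * (n + 1 : ℕ) ^ 2)) (d + 1 - xx l (n + 1) r) : ℝ) : ℂ) := by
  have h2 := cc_refl hζ l (n - r) (by omega)
  rw [show n - (n - r) = r by omega] at h2
  rw [h2]
  obtain ⟨s, rfl⟩ := Nat.exists_eq_add_of_le hr
  rw [show r + s - r = s by omega]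
  have e1 : ζ ^ (2 * (l + 1) * (d * (r + s + 1) + s) ^ 2 + (2 * l + 3) * (d * (r + s + 1) + s) + 1) =
      ζ ^ (2 * (l + 1) * s ^ 2 + (2 * l + 3) * s + 1) := by
    apply root_pow_eq hζ 0 (2 * (l + 1) * (d ^ 2 * (r + s + 1) + 2 * d * s) + (2 * l + 3) * d)
    ring
  unfold dd
  rw [qt_pow, e1]
  congr 1
  unfold gf
  rw [← Real.exp_add, Complex.ofReal_exp]
  congr 1
  have h1 : (r : ℝ) + s + 1 ≠ 0 := by positivity
  have h2 : (l : ℝ) + 1 ≠ 0 := by positivity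
  have h : -(((2 * (l + 1) * (d * (r + s + 1) + s) ^ 2 + (2 * l + 3) * (d * (r + s + 1) + s) + 1 : ℕ) : ℝ) * t) =
      t * kap l + -(t * (2 * (l + 1) * (r + s + 1 : ℕ) ^ 2) * (d + 1 - xx l (r + s + 1) r) ^ 2) := by
    unfold kap xx
    push_cast
    field_simp
    ring
  rw [← h]; push_cast; ring

lemma block_sum {ζ : ℂ} {n : ℕ} (hζ : ζ ^ (n + 1) = 1) (l d : ℕ) (t : ℝ) :
    ∑ r ∈ range (n + 1), ww l (qt ζ t) (d * (n + 1) + r) =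
      ∑ r ∈ range (n + 1), cc l ζ r * ((Real.exp (t * kap l) : ℝ) : ℂ) *
        ((gf (t * (2 * (l + 1) * (n + 1 : ℕ) ^ 2)) (d + xx l (n + 1) r) -
          gf (t * (2 * (l + 1) * (n + 1 : ℕ) ^ 2)) (d + 1 - xx l (n + 1) r) : ℝ) : ℂ) := by
  have h := Finset.sum_range_reflect (fun r => dd l (qt ζ t) (d * (n + 1) + r)) (n + 1)
  simp only [ww_cd]
  rw [Finset.sum_sub_distrib, ← h, ← Finset.sum_sub_distrib]
  apply Finset.sum_congr rfl
  intro r hr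
  have hr' : r ≤ n := by simpa [Nat.lt_succ_iff] using hr
  rw [show n + 1 - 1 - r = n - r by omega, cc_qt hζ, dd_qt hζ l d r hr']
  push_cast; ring

lemma xx_mem (l n r : ℕ) (hr : r ≤ n) : 0 ≤ xx l (n + 1) r ∧ xx l (n + 1) r ≤ 1 := by
  unfold xx
  constructor
  · positivity
  · rw [div_le_one (by positivity)]
    push_cast
    have h : (r : ℝ) ≤ n := by exact_mod_cast hr
    have h0 : (0 : ℝ) ≤ l := Nat.cast_nonneg l
    nlinarith

open Filter Topology in
lemma G_lim {ζ : ℂ} {n : ℕ} (hζ : IsPrimitiveRoot ζ (n + 1)) (hnorm : ‖ζ‖ = 1) (l : ℕ) :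
    Tendsto (fun t => G (l + 2) (qt ζ t)) (𝓝[>] 0)
      (𝓝 (∑ r ∈ range (n + 1), cc l ζ r * ((1 - 2 * xx l (n + 1) r : ℝ) : ℂ))) := by
  have hne0 : ζ ≠ 0 := hζ.ne_zero (Nat.succ_ne_zero n)
  have hS : ∀ r : ℕ, ∃ S : ℝ → ℝ, r ≤ n → (Tendsto S (𝓝[>] 0) (𝓝 (1 - 2 * xx l (n + 1) r)) ∧
      ∀ τ, 0 < τ → HasSum (fun d : ℕ => gf τ (d + xx l (n + 1) r) - gf τ (d + 1 - xx l (n + 1) r)) (S τ)) := by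
    intro r
    by_cases hr : r ≤ n
    · obtain ⟨S, hS⟩ := false_theta _ (xx_mem l n r hr).1 (xx_mem l n r hr).2
      exact ⟨S, fun _ => hS⟩
    · exact ⟨0, fun h => absurd h hr⟩
  choose S hS using hS
  set A : ℝ := 2 * (l + 1) * (n + 1 : ℕ) ^ 2 with hA
  have hApos : 0 < A := by positivity
  have hG : ∀ t, 0 < t → G (l + 2) (qt ζ t) =
      ∑ r ∈ range (n + 1), cc l ζ r * ((Real.exp (t * kap l) : ℝ) : ℂ) * ((S r (t * A) : ℝ) : ℂ) := by
    intro t ht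
    have hq0 : qt ζ t ≠ 0 := mul_ne_zero hne0 (Complex.exp_ne_zero _)
    have h1 := (G_eq (qt ζ t) hq0 (qt_norm hnorm t ht) l).tendsto_sum_nat
    have h2 : Tendsto (fun D : ℕ => D * (n + 1)) atTop atTop :=
      tendsto_id.atTop_mul_const' (Nat.succ_pos n)
    have h3 := h1.comp h2
    have h4 : HasSum (fun d : ℕ => ∑ r ∈ range (n + 1), ww l (qt ζ t) (d * (n + 1) + r))
        (∑ r ∈ range (n + 1), cc l ζ r * ((Real.exp (t * kap l) : ℝ) : ℂ) * ((S r (t * A) : ℝ) : ℂ)) := by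
      simp only [block_sum hζ.pow_eq_one]
      apply hasSum_sum
      intro r hr
      have hr' : r ≤ n := by simpa [Nat.lt_succ_iff] using hr
      apply HasSum.mul_left
      exact Complex.hasSum_ofReal.mpr ((hS r hr').2 (t * A) (by positivity))
    refine tendsto_nhds_unique h3 (h4.tendsto_sum_nat.congr ?_)
    intro D
    rw [Function.comp_apply, sum_range_blocks]
  have hlim : Tendsto (fun t : ℝ => ∑ r ∈ range (n + 1), cc l ζ r * ((Real.exp (t * kap l) : ℝ) : ℂ) *
      ((S r (t * A) : ℝ) : ℂ)) (𝓝[>] 0) (𝓝 (∑ r ∈ range (n + 1), cc l ζ r * ((1 - 2 * xx l (n + 1) r : ℝ) : ℂ))) := by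
    refine tendsto_finsetSum _ ?_
    intro r hr
    have hr' : r ≤ n := by simpa [Nat.lt_succ_iff] using hr
    have ht : Tendsto (fun t : ℝ => t * A) (𝓝[>] 0) (𝓝[>] 0) := by
      rw [tendsto_nhdsWithin_iff]
      constructor
      · have : Tendsto (fun t : ℝ => t * A) (𝓝 0) (𝓝 (0 * A)) := (continuous_id.mul continuous_const).tendsto 0
        rw [zero_mul] at this
        exact this.mono_left nhdsWithin_le_nhds
      · filter_upwards [self_mem_nhdsWithin] with t ht
        have : (0 : ℝ) < t := ht
        exact mul_pos this hApos
    have h1 := (Complex.continuous_ofReal.tendsto _).comp ((hS r hr').1.comp ht)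
    have h2 : Tendsto (fun t : ℝ => cc l ζ r * ((Real.exp (t * kap l) : ℝ) : ℂ)) (𝓝[>] 0) (𝓝 (cc l ζ r)) := by
      have hc : Continuous (fun t : ℝ => cc l ζ r * ((Real.exp (t * kap l) : ℝ) : ℂ)) := by fun_prop
      have := hc.tendsto 0
      simp only [zero_mul, Real.exp_zero, Complex.ofReal_one, mul_one] at this
      exact this.mono_left nhdsWithin_le_nhds
    exact h2.mul h1
  refine hlim.congr' ?_
  filter_upwards [self_mem_nhdsWithin] with t ht
  exact (hG t ht).symm

lemma final_val {ζ : ℂ} {n : ℕ} (hζ : IsPrimitiveRoot ζ (n + 1)) (hN : Odd (n + 1)) (hnorm : ‖ζ‖ = 1) (l : ℕ) :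
    ((l : ℂ) + 1) * ∑ r ∈ range (n + 1), cc l ζ r * ((1 - 2 * xx l (n + 1) r : ℝ) : ℂ) =
      U (l + 2) (n + 1) ζ := by
  rw [U_val hζ hN hnorm, Finset.mul_sum, Finset.sum_div]
  apply Finset.sum_congr rfl
  intro r _
  have h1 : (n : ℂ) + 1 ≠ 0 := by exact_mod_cast Nat.succ_ne_zero n
  have h2 : (l : ℂ) + 1 ≠ 0 := by exact_mod_cast Nat.succ_ne_zero l
  unfold xx
  push_cast
  field_simp
  ring

theorem stmt10 (m : ℕ) (hm : 2 ≤ m) (M : ℤ) (N : ℕ) (hN : 0 < N) (hNodd : Odd N)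
    (hMN : IsCoprime M (N : ℤ)) :
    Filter.Tendsto
      (fun t : ℝ => ((m : ℂ) - 1) *
        Complex.exp ((2 * Real.pi * Complex.I * M / N - t) *
          ((2 * (m : ℂ) - 3) ^ 2 / (8 * ((m : ℂ) - 1)))) *
        G m (Complex.exp (2 * Real.pi * Complex.I * M / N - t)))
      (nhdsWithin 0 (Set.Ioi 0))
      (nhds (Complex.exp (2 * Real.pi * Complex.I * M * ((2 * (m : ℂ) - 3) ^ 2) /
          (8 * ((m : ℂ) - 1) * N)) *
        U m N (Complex.exp (2 * Real.pi * Complex.I * M / N)))) := by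
  obtain ⟨l, rfl⟩ : ∃ l, m = l + 2 := ⟨m - 2, by omega⟩
  obtain ⟨n, rfl⟩ : ∃ n, N = n + 1 := ⟨N - 1, by omega⟩
  set ζ := Complex.exp (2 * Real.pi * Complex.I * M / ((n + 1 : ℕ) : ℂ)) with hζdef
  have hζ : IsPrimitiveRoot ζ (n + 1) := by
    have h := Complex.isPrimitiveRoot_exp_of_isCoprime M (n + 1) (Nat.succ_ne_zero n) hMN
    rwa [← mul_div_assoc] at h
  have hnorm : ‖ζ‖ = 1 := hζ.norm'_eq_one (Nat.succ_ne_zero n)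
  have hqt : ∀ t : ℝ, Complex.exp (2 * Real.pi * Complex.I * M / ((n + 1 : ℕ) : ℂ) - t) = qt ζ t := by
    intro t
    rw [sub_eq_add_neg, Complex.exp_add]; rfl
  simp only [hqt]
  have hG := G_lim hζ hnorm l
  have hpre : Filter.Tendsto (fun t : ℝ => Complex.exp ((2 * Real.pi * Complex.I * M / ((n + 1 : ℕ) : ℂ) - t) *
          ((2 * ((l + 2 : ℕ) : ℂ) - 3) ^ 2 / (8 * (((l + 2 : ℕ) : ℂ) - 1))))) (nhdsWithin 0 (Set.Ioi 0))
      (nhds (Complex.exp (2 * Real.pi * Complex.I * M * ((2 * ((l + 2 : ℕ) : ℂ) - 3) ^ 2) /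
          (8 * (((l + 2 : ℕ) : ℂ) - 1) * ((n + 1 : ℕ) : ℂ))))) := by
    have hc : Continuous (fun t : ℝ => Complex.exp ((2 * Real.pi * Complex.I * M / ((n + 1 : ℕ) : ℂ) - t) *
          ((2 * ((l + 2 : ℕ) : ℂ) - 3) ^ 2 / (8 * (((l + 2 : ℕ) : ℂ) - 1))))) := by fun_prop
    have h := hc.tendsto 0
    rw [Complex.ofReal_zero, sub_zero, div_mul_div_comm, mul_comm ((n + 1 : ℕ) : ℂ)] at h
    exact h.mono_left nhdsWithin_le_nhds
  have h := (hpre.const_mul (((l + 2 : ℕ) : ℂ) - 1)).mul hG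
  rw [← final_val hζ hNodd hnorm l]
  have e : ((l + 2 : ℕ) : ℂ) - 1 = (l : ℂ) + 1 := by push_cast; ring
  have e2 : ∀ a b : ℂ, a * (((l : ℂ) + 1) * b) = (((l + 2 : ℕ) : ℂ) - 1) * a * b := by
    intro a b; rw [e]; ring
  rw [e2]
  exact h
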